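/- arXiv:1304.6671 — 6 statements merged into one kernel-verified Lean document; each statement's English description precedes it below -/
import Mathlib

section
/- Let m ≥ 1 and let u₁,…,u_m, v₁,…,v_m be real numbers with u_i > 0 and v_i > 0 for all i. For a real number c let L_c act on differentiable functions by (L_c g)(x) = x·g′(x) + c·g(x), and define the differential operator T(u,v)f = −x·(L_{2−v₁}∘⋯∘L_{2−v_m})f + (L_{1−u₁}∘⋯∘L_{1−u_m})f. Suppose f is smooth on an open neighborhood of (0,1], satisfies T(u,v)f(x) = 0 for all x ∈ (0,1], satisfies f^{(j)}(1) = 0 for 0 ≤ j ≤ m−1, and x ↦ xʲ f^{(j)}(x) is integrable on (0,1) for 0 ≤ j ≤ m. Then for every natural number n, ∫₀¹ xⁿ f(x) dx = (∏_{i=1}^m (u_i)_n/(v_i)_n) · ∫₀¹ f(x) dx. -/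
open MeasureTheory Polynomial

/-- The operator `L_c g (x) = x g'(x) + c g(x)`, i.e. `L_c = D + c` with `D = x d/dx`. -/
noncomputable def Lop (c : ℝ) (g : ℝ → ℝ) : ℝ → ℝ :=
  fun x => x * deriv g x + c * g x

/-- Iterated composition `L_{c₁} ∘ L_{c₂} ∘ ⋯ ∘ L_{cₘ}` applied to `g`. -/
noncomputable def iterLop (cs : List ℝ) (g : ℝ → ℝ) : ℝ → ℝ :=
  cs.foldr Lop g

lemma tendsto_aux (g : ℝ → ℝ) (hd : ∀ x ∈ Set.Ioc (0:ℝ) 1, DifferentiableAt ℝ g x)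
    (hg : IntervalIntegrable g volume 0 1)
    (hL : IntervalIntegrable (fun x => x * deriv g x) volume 0 1) :
    Filter.Tendsto (fun x => x * g x) (nhdsWithin 0 (Set.Ioi 0)) (nhds 0) := by
  have hF : IntervalIntegrable (fun x => x * deriv g x + g x) volume 0 1 := hL.add hg
  have hcont := intervalIntegral.continuousOn_primitive_interval' hF
    (a := 1) Set.right_mem_uIcc
  rw [Set.uIcc_of_le zero_le_one] at hcont
  have hmem : Set.Ioc (0:ℝ) 1 ∈ nhdsWithin (0:ℝ) (Set.Ioi 0) := Ioc_mem_nhdsGT zero_lt_one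
  have h0 : Filter.Tendsto (fun b => ∫ x in (1:ℝ)..b, (x * deriv g x + g x))
      (nhdsWithin 0 (Set.Ioi 0)) (nhds (∫ x in (1:ℝ)..0, (x * deriv g x + g x))) := by
    refine (hcont 0 (by simp)).mono_left ?_
    rw [nhdsWithin_le_iff]
    exact Filter.mem_of_superset hmem Set.Ioc_subset_Icc_self
  set l := g 1 + ∫ x in (1:ℝ)..0, (x * deriv g x + g x) with hl
  have h1 : Filter.Tendsto (fun x => x * g x) (nhdsWithin 0 (Set.Ioi 0)) (nhds l) := by
    refine (h0.const_add (g 1)).congr' ?_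
    filter_upwards [hmem] with b hb
    have hsub : Set.uIcc 1 b ⊆ Set.Ioc (0:ℝ) 1 := by
      rw [Set.uIcc_of_ge hb.2]
      exact fun y hy => ⟨hb.1.trans_le hy.1, hy.2⟩
    have := intervalIntegral.integral_eq_sub_of_hasDerivAt (a := 1) (b := b)
      (f := fun x => x * g x) (f' := fun x => x * deriv g x + g x)
      (fun x hx => by
        exact ((hasDerivAt_id' x).fun_mul (hd x (hsub hx)).hasDerivAt).congr_deriv (by ring))
      (hF.mono_set (by
        rw [Set.uIcc_of_le (zero_le_one' ℝ)]
        exact hsub.trans Set.Ioc_subset_Icc_self))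
    rw [this]; ring
  by_cases hl0 : l = 0
  · rwa [hl0] at h1
  exfalso
  have hlpos : 0 < |l| := abs_pos.mpr hl0
  have hev : ∀ᶠ x in nhdsWithin (0:ℝ) (Set.Ioi 0), |l| / 2 < |x * g x| :=
    h1.abs.eventually (lt_mem_nhds (by linarith))
  obtain ⟨e, he, hes⟩ := (mem_nhdsGT_iff_exists_Ioc_subset).1 (Filter.inter_mem hev hmem)
  have he0 : (0:ℝ) < e := he
  have hint : IntervalIntegrable (fun x : ℝ => x⁻¹) volume 0 e := by
    have he1 : e ≤ 1 := (hes ⟨he0, le_rfl⟩).2.2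
    have hge : IntervalIntegrable (fun x => (2 / |l|) * g x) volume 0 e :=
      (hg.mono_set (by
        rw [Set.uIcc_of_le he0.le, Set.uIcc_of_le zero_le_one]
        exact Set.Icc_subset_Icc_right he1)).const_mul _
    rw [intervalIntegrable_iff_integrableOn_Ioc_of_le he0.le] at hge ⊢
    refine Integrable.mono hge measurable_inv.aestronglyMeasurable ?_
    refine (ae_restrict_iff' measurableSet_Ioc).2 (Filter.Eventually.of_forall fun x hx => ?_)
    have h2 : |l| / 2 < |x * g x| := (hes hx).1
    have hx0 : 0 < x := hx.1
    rw [abs_mul, abs_of_pos hx0] at h2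
    rw [Real.norm_eq_abs, Real.norm_eq_abs, abs_mul, abs_of_pos (inv_pos.2 hx0),
      abs_of_pos (div_pos two_pos hlpos), inv_le_iff_one_le_mul₀ hx0]
    have : 2 / |l| * |g x| * x = (x * |g x|) / (|l| / 2) := by field_simp
    rw [this, le_div_iff₀ (by linarith)]
    linarith
  rw [intervalIntegrable_inv_iff] at hint
  rcases hint with h | h
  · exact he0.ne h
  · exact h Set.left_mem_uIcc

lemma pow_mul_int (n : ℕ) {h : ℝ → ℝ} (hh : IntervalIntegrable h volume 0 1) :
    IntervalIntegrable (fun x => x ^ n * h x) volume 0 1 :=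
  hh.continuousOn_mul (by fun_prop)

lemma key_step (g : ℝ → ℝ) (c : ℝ) (n : ℕ)
    (hd : ∀ x ∈ Set.Ioc (0:ℝ) 1, DifferentiableAt ℝ g x)
    (hg : IntervalIntegrable g volume 0 1)
    (hLc : IntervalIntegrable (Lop c g) volume 0 1) (h1 : g 1 = 0) :
    ∫ x in (0:ℝ)..1, x ^ n * Lop c g x = (c - n - 1) * ∫ x in (0:ℝ)..1, x ^ n * g x := by
  have hL : IntervalIntegrable (fun x => x * deriv g x) volume 0 1 := by
    have := hLc.sub (hg.const_mul c)
    refine this.congr (fun x _ => ?_)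
    simp [Lop]
  have ht := tendsto_aux g hd hg hL
  have hn := pow_mul_int n hg
  have hnL := pow_mul_int n hLc
  have hsum := hnL.add (hn.const_mul (n + 1 - c))
  have hft := intervalIntegral.integral_eq_sub_of_hasDerivAt_of_tendsto (a := 0) (b := 1)
    (f := fun x => x ^ n * (x * g x))
    (f' := fun x => x ^ n * Lop c g x + (n + 1 - c) * (x ^ n * g x)) (fa := 0) (fb := 0)
    zero_lt_one
    (fun x hx => by
      have := (hasDerivAt_pow (n + 1) x).mul (hd x ⟨hx.1, hx.2.le⟩).hasDerivAt
      have h2 : (fun x => x ^ n * (x * g x)) = ((fun x => x ^ (n + 1)) * g) := by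
        ext y; simp; ring
      rw [h2]
      refine this.congr_deriv ?_
      simp only [Lop, Nat.add_sub_cancel]
      push_cast
      ring)
    hsum
    (by
      have hp : Filter.Tendsto (fun x : ℝ => x ^ n) (nhdsWithin 0 (Set.Ioi 0)) (nhds (0 ^ n)) :=
        ((continuous_pow n).tendsto 0).mono_left nhdsWithin_le_nhds
      simpa using hp.mul ht)
    (by
      have : ContinuousAt (fun x => x ^ n * (x * g x)) 1 := by
        have := (hd 1 (by simp)).continuousAt
        fun_prop
      have h3 := this.tendsto.mono_left (nhdsWithin_le_nhds (s := Set.Iio 1))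
      simpa [h1] using h3)
  rw [intervalIntegral.integral_add hnL (hn.const_mul _),
    intervalIntegral.integral_const_mul] at hft
  linarith

lemma hasDeriv_iter (f : ℝ → ℝ) (U : Set ℝ) (hU : IsOpen U)
    (hf : ContDiffOn ℝ (⊤ : ℕ∞) f U) (j : ℕ) (x : ℝ) (hx : x ∈ U) :
    HasDerivAt (iteratedDeriv j f) (iteratedDeriv (j + 1) f x) x := by
  rw [iteratedDeriv_succ]
  refine DifferentiableAt.hasDerivAt ?_
  have h := hf.differentiableOn_iteratedDerivWithin (m := j)
    (by exact_mod_cast WithTop.coe_lt_top j) hU.uniqueDiffOn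
  have h2 := (h x hx).differentiableAt (hU.mem_nhds hx)
  refine h2.congr_of_eventuallyEq ?_
  filter_upwards [hU.mem_nhds hx] with y hy
  exact (iteratedDerivWithin_of_isOpen hU hy).symm

lemma hasDeriv_sum (f : ℝ → ℝ) (U : Set ℝ) (hU : IsOpen U)
    (hf : ContDiffOn ℝ (⊤ : ℕ∞) f U) (g : ℝ → ℝ) (k : ℕ) (a : ℕ → ℝ)
    (hg : ∀ x ∈ U, g x = ∑ j ∈ Finset.range k, a j * (x ^ j * iteratedDeriv j f x))
    (x : ℝ) (hx : x ∈ U) :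
    HasDerivAt g (∑ j ∈ Finset.range k, a j * ((j * x ^ (j - 1)) * iteratedDeriv j f x +
      x ^ j * iteratedDeriv (j + 1) f x)) x := by
  have h : HasDerivAt (fun x => ∑ j ∈ Finset.range k, a j * (x ^ j * iteratedDeriv j f x))
      (∑ j ∈ Finset.range k, a j * ((j * x ^ (j - 1)) * iteratedDeriv j f x +
      x ^ j * iteratedDeriv (j + 1) f x)) x := by
    refine HasDerivAt.fun_sum fun j _ => ?_
    exact ((hasDerivAt_pow j x).mul (hasDeriv_iter f U hU hf j x hx)).const_mul (a j)
  refine h.congr_of_eventuallyEq ?_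
  filter_upwards [hU.mem_nhds hx] with y hy
  exact hg y hy

lemma repr_iter (f : ℝ → ℝ) (U : Set ℝ) (hU : IsOpen U)
    (hf : ContDiffOn ℝ (⊤ : ℕ∞) f U) (cs : List ℝ) :
    ∃ a : ℕ → ℝ, ∀ x ∈ U, iterLop cs f x =
      ∑ j ∈ Finset.range (cs.length + 1), a j * (x ^ j * iteratedDeriv j f x) := by
  induction cs with
  | nil => exact ⟨fun _ => 1, fun x _ => by simp [iterLop]⟩
  | cons c cs ih =>
    obtain ⟨a, ha⟩ := ih
    refine ⟨fun j => (j + c) * (if j < cs.length + 1 then a j else 0) +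
      if j = 0 then 0 else a (j - 1), fun x hx => ?_⟩
    have hd := (hasDeriv_sum f U hU hf _ _ a ha x hx).deriv
    have h1 : iterLop (c :: cs) f x = x * deriv (iterLop cs f) x + c * iterLop cs f x := rfl
    rw [h1, hd, ha x hx]
    simp only [add_mul (_ * _) _ (_ * _), Finset.sum_add_distrib, List.length_cons]
    rw [Finset.sum_range_succ (fun j : ℕ => ((j + c) * (if j < cs.length + 1 then a j else 0)) * _),
      Finset.sum_range_succ' (fun j => (if j = 0 then 0 else a (j - 1)) * _)]
    simp only [lt_irrefl, if_false, mul_zero, zero_mul, add_zero, if_true, Nat.add_sub_cancel,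
      Nat.succ_ne_zero]
    rw [Finset.mul_sum, Finset.mul_sum, ← Finset.sum_add_distrib, ← Finset.sum_add_distrib]
    refine Finset.sum_congr rfl fun j hj => ?_
    rw [if_pos (Finset.mem_range.1 hj)]
    rcases j with _ | j
    · simp; ring
    · simp only [Nat.add_sub_cancel]; push_cast; ring

lemma iter_moment (m : ℕ) (f : ℝ → ℝ) (U : Set ℝ) (hU : IsOpen U)
    (hUsub : Set.Ioc (0:ℝ) 1 ⊆ U) (hf : ContDiffOn ℝ (⊤ : ℕ∞) f U)
    (hvanish : ∀ j, j + 1 ≤ m → iteratedDeriv j f 1 = 0)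
    (hint : ∀ j ≤ m, IntegrableOn (fun x => x ^ j * iteratedDeriv j f x)
      (Set.Ioo (0:ℝ) 1)) (n : ℕ) (cs : List ℝ) (hcs : cs.length ≤ m) :
    IntervalIntegrable (iterLop cs f) volume 0 1 ∧
    ∫ x in (0:ℝ)..1, x ^ n * iterLop cs f x =
      (cs.map fun c : ℝ => c - (n : ℝ) - 1).prod * ∫ x in (0:ℝ)..1, x ^ n * f x := by
  have hI : ∀ cs : List ℝ, cs.length ≤ m → IntervalIntegrable (iterLop cs f) volume 0 1 := by
    intro cs hcs
    obtain ⟨a, ha⟩ := repr_iter f U hU hf cs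
    rw [intervalIntegrable_iff_integrableOn_Ioo_of_le zero_le_one]
    have : IntegrableOn (fun x => ∑ j ∈ Finset.range (cs.length + 1),
        a j * (x ^ j * iteratedDeriv j f x)) (Set.Ioo (0:ℝ) 1) :=
      integrable_finsetSum _ fun j hj =>
        (hint j (by have := Finset.mem_range.1 hj; omega)).const_mul (a j)
    exact this.congr_fun (fun x hx => (ha x (hUsub ⟨hx.1, hx.2.le⟩)).symm) measurableSet_Ioo
  refine ⟨hI cs hcs, ?_⟩
  induction cs with
  | nil => simp [iterLop]
  | cons c cs ih =>
    have hlen : cs.length + 1 ≤ m := by simpa using hcs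
    obtain ⟨a, ha⟩ := repr_iter f U hU hf cs
    have hk := key_step (iterLop cs f) c n
      (fun x hx => (hasDeriv_sum f U hU hf _ _ a ha x (hUsub hx)).differentiableAt)
      (hI cs (by omega)) (hI (c :: cs) hcs)
      (by
        rw [ha 1 (hUsub (by simp))]
        refine Finset.sum_eq_zero fun j hj => ?_
        rw [hvanish j (by have := Finset.mem_range.1 hj; omega)]
        simp)
    have h1 : iterLop (c :: cs) f = Lop c (iterLop cs f) := rfl
    rw [h1, hk, ih (by omega), List.map_cons, List.prod_cons, mul_assoc]

/-- If `f` solves the differential system `T(u,v) f = 0` on `(0,1]` with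
    `f⁽ʲ⁾(1) = 0` for `0 ≤ j ≤ m-1`, then its moments satisfy
    `∫₀¹ xⁿ f = ∏ᵢ (uᵢ)ₙ/(vᵢ)ₙ ∫₀¹ f`. -/
theorem moments_of_differential_system (m : ℕ) (hm : 1 ≤ m)
    (u v : Fin m → ℝ) (hu : ∀ i, 0 < u i) (hv : ∀ i, 0 < v i)
    (f : ℝ → ℝ) (U : Set ℝ) (hU : IsOpen U) (hUsub : Set.Ioc (0:ℝ) 1 ⊆ U)
    (hf : ContDiffOn ℝ (⊤ : ℕ∞) f U)
    (hT : ∀ x ∈ Set.Ioc (0:ℝ) 1,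
      -x * iterLop (List.ofFn fun i => 2 - v i) f x +
        iterLop (List.ofFn fun i => 1 - u i) f x = 0)
    (hvanish : ∀ j, j + 1 ≤ m → iteratedDeriv j f 1 = 0)
    (hint : ∀ j ≤ m, IntegrableOn (fun x => x ^ j * iteratedDeriv j f x)
      (Set.Ioo (0:ℝ) 1)) :
    ∀ n : ℕ, ∫ x in (0:ℝ)..1, x ^ n * f x =
      (∏ i, (ascPochhammer ℝ n).eval (u i) / (ascPochhammer ℝ n).eval (v i)) *
        ∫ x in (0:ℝ)..1, f x := by
  intro n
  induction n with
  | zero => simp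
  | succ n ih =>
    obtain ⟨hIv, hv1⟩ := iter_moment m f U hU hUsub hf hvanish hint (n + 1)
      (List.ofFn fun i => 2 - v i) (by simp)
    obtain ⟨hIu, hu1⟩ := iter_moment m f U hU hUsub hf hvanish hint n
      (List.ofFn fun i => 1 - u i) (by simp)
    have heq : ∫ x in (0:ℝ)..1, x ^ (n + 1) * iterLop (List.ofFn fun i => 2 - v i) f x =
        ∫ x in (0:ℝ)..1, x ^ n * iterLop (List.ofFn fun i => 1 - u i) f x := by
      refine intervalIntegral.integral_congr_ae (Filter.Eventually.of_forall fun x hx => ?_)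
      rw [Set.uIoc_of_le zero_le_one] at hx
      have h := hT x hx
      have h2 : iterLop (List.ofFn fun i => 1 - u i) f x =
        x * iterLop (List.ofFn fun i => 2 - v i) f x := by linarith
      rw [h2]; ring
    rw [hv1, hu1, List.map_ofFn, List.map_ofFn, List.prod_ofFn, List.prod_ofFn] at heq
    have e1 : ∏ i, ((fun c : ℝ => c - ((n + 1 : ℕ) : ℝ) - 1) ∘ fun i => 2 - v i) i =
        ∏ i : Fin m, (-1) * (v i + n) :=
      Finset.prod_congr rfl fun i _ => by simp; ring
    have e2 : ∏ i, ((fun c : ℝ => c - (n : ℝ) - 1) ∘ fun i => 1 - u i) i =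
        ∏ i : Fin m, (-1) * (u i + n) :=
      Finset.prod_congr rfl fun i _ => by simp; ring
    rw [e1, e2, Finset.prod_mul_distrib, Finset.prod_mul_distrib, mul_assoc, mul_assoc] at heq
    have hs : (∏ _i : Fin m, (-1 : ℝ)) ≠ 0 := Finset.prod_ne_zero_iff.2 fun _ _ => by norm_num
    have heq2 := mul_left_cancel₀ hs heq
    have hvn : (∏ i, (v i + n)) ≠ 0 :=
      Finset.prod_ne_zero_iff.2 fun i _ => by have := hv i; positivity
    have e3 : ∏ i, (ascPochhammer ℝ (n + 1)).eval (u i) / (ascPochhammer ℝ (n + 1)).eval (v i) =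
        (∏ i, (u i + n)) / (∏ i, (v i + n)) *
        ∏ i, (ascPochhammer ℝ n).eval (u i) / (ascPochhammer ℝ n).eval (v i) := by
      rw [← Finset.prod_div_distrib, ← Finset.prod_mul_distrib]
      refine Finset.prod_congr rfl fun i _ => ?_
      rw [ascPochhammer_succ_eval, ascPochhammer_succ_eval, mul_div_mul_comm, mul_comm]
    rw [e3, mul_assoc, ← ih, div_mul_eq_mul_div, eq_div_iff hvn, ← heq2, mul_comm]
end

section
/- Let m ≥ 1, let u₁,…,u_m be real numbers, let f be a smooth function on an open interval I ⊆ (0,∞), and let L_c g(x) = x·g′(x) + c·g(x). Then for all x ∈ I, (L_{1−u₁}∘⋯∘L_{1−u_m} f)(x) = Σ_{j=0}^m a_j xʲ f^{(j)}(x), where a_j = Σ_{i=j}^m S(i,j) e_{m−i}(1−u₁,…,1−u_m), S(i,j) are Stirling numbers of the second kind, and e_k denotes the elementary symmetric polynomial of degree k in m variables. -/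
/-- Stirling numbers of the second kind, via the recurrence
    `S(k+1, i+1) = S(k, i) + (i+1) S(k, i+1)`, `S(0,0) = 1`. -/
def stirling2 : ℕ → ℕ → ℕ
  | 0, 0 => 1
  | 0, _ + 1 => 0
  | _ + 1, 0 => 0
  | k + 1, i + 1 => stirling2 k i + (i + 1) * stirling2 k (i + 1)

/-- The elementary symmetric polynomial of degree `k` in the variables
    `z₁, …, z_m`. -/
def esym {m : ℕ} (k : ℕ) (z : Fin m → ℝ) : ℝ :=
  ∑ s ∈ Finset.powersetCard k (Finset.univ : Finset (Fin m)), ∏ i ∈ s, z i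

open Polynomial in
/-- The polynomial attached to a list of shifts. -/
noncomputable def listPoly (cs : List ℝ) : ℝ[X] := (cs.map fun c => X + C c).prod

/-- The expansion of the `i`-th power of the Euler operator. -/
noncomputable def eulerT (f : ℝ → ℝ) (i : ℕ) (x : ℝ) : ℝ :=
  ∑ j ∈ Finset.range (i + 1), (stirling2 i j : ℝ) * (x ^ j * iteratedDeriv j f x)

theorem stirling2_eq_zero : ∀ {n k : ℕ}, n < k → stirling2 n k = 0
  | 0, 0, h => by omega
  | 0, _ + 1, _ => by rw [stirling2]
  | _ + 1, 0, h => by omega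
  | n + 1, k + 1, h => by
    rw [stirling2, stirling2_eq_zero (n := n) (k := k) (by omega),
      stirling2_eq_zero (n := n) (k := k + 1) (by omega)]
    simp

theorem eulerT_hasDeriv (f : ℝ → ℝ) (i : ℕ) (x : ℝ)
    (hf : ContDiffAt ℝ (⊤ : ℕ∞) f x) :
    DifferentiableAt ℝ (eulerT f i) x ∧ x * deriv (eulerT f i) x = eulerT f (i + 1) x := by
  have hd : ∀ j, HasDerivAt (iteratedDeriv j f) (iteratedDeriv (j + 1) f x) x := by
    intro j
    have h : DifferentiableAt ℝ (iteratedDeriv j f) x := by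
      rw [iteratedDeriv_eq_equiv_comp, LinearIsometryEquiv.comp_differentiableAt_iff]
      exact hf.differentiableAt_iteratedFDeriv (by exact_mod_cast WithTop.coe_lt_top j)
    rw [iteratedDeriv_succ]
    exact h.hasDerivAt
  have hT : HasDerivAt (eulerT f i) (∑ j ∈ Finset.range (i + 1), (stirling2 i j : ℝ) *
      ((j * x ^ (j - 1)) * iteratedDeriv j f x + x ^ j * iteratedDeriv (j + 1) f x)) x := by
    have := HasDerivAt.fun_sum (u := Finset.range (i + 1)) (fun j _ =>
      ((hasDerivAt_pow j x).mul (hd j)).const_mul (stirling2 i j : ℝ))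
    exact this
  refine ⟨hT.differentiableAt, ?_⟩
  rw [hT.deriv, eulerT, Finset.sum_range_succ' _ (i + 1), Finset.mul_sum]
  have e1 : ∀ j ∈ Finset.range (i + 1), x * ((stirling2 i j : ℝ) *
      ((j * x ^ (j - 1)) * iteratedDeriv j f x + x ^ j * iteratedDeriv (j + 1) f x))
      = (j * stirling2 i j : ℝ) * (x ^ j * iteratedDeriv j f x) +
        (stirling2 i j : ℝ) * (x ^ (j + 1) * iteratedDeriv (j + 1) f x) := by
    intro j _
    rcases j with _ | j
    · simp; ring
    · simp; ring
  have e2 : ∀ j ∈ Finset.range (i + 1), (stirling2 (i + 1) (j + 1) : ℝ) *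
      (x ^ (j + 1) * iteratedDeriv (j + 1) f x) =
      (((j + 1 : ℕ) : ℝ) * stirling2 i (j + 1) : ℝ) *
        (x ^ (j + 1) * iteratedDeriv (j + 1) f x) +
        (stirling2 i j : ℝ) * (x ^ (j + 1) * iteratedDeriv (j + 1) f x) := by
    intro j _
    rw [stirling2]; push_cast; ring
  rw [Finset.sum_congr rfl e1, Finset.sum_congr rfl e2, Finset.sum_add_distrib,
    Finset.sum_add_distrib]
  have e3 := Finset.sum_range_succ'
    (fun j => ((j : ℝ) * stirling2 i j : ℝ) * (x ^ j * iteratedDeriv j f x)) (i + 1)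
  rw [Finset.sum_range_succ, stirling2_eq_zero (Nat.lt_succ_self i)] at e3
  simp only [Nat.cast_zero, mul_zero, zero_mul, add_zero] at e3
  rw [e3]
  simp [stirling2]

theorem listPoly_natDegree (cs : List ℝ) : (listPoly cs).natDegree ≤ cs.length := by
  induction cs with
  | nil => simp [listPoly]
  | cons c cs ih =>
    have : listPoly (c :: cs) = (Polynomial.X + Polynomial.C c) * listPoly cs := by
      simp [listPoly]
    rw [this]
    refine Polynomial.natDegree_mul_le.trans ?_
    rw [Polynomial.natDegree_X_add_C, List.length_cons]
    omega

theorem iterLop_expand (f : ℝ → ℝ) (s : Set ℝ) (hs : IsOpen s)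
    (hf : ∀ x ∈ s, ContDiffAt ℝ (⊤ : ℕ∞) f x) (cs : List ℝ) :
    ∀ x ∈ s, iterLop cs f x =
      ∑ i ∈ Finset.range (cs.length + 1), (listPoly cs).coeff i * eulerT f i x := by
  induction cs with
  | nil => intro x _; simp [iterLop, listPoly, eulerT, stirling2]
  | cons c cs ih =>
    intro x hx
    have hP : listPoly (c :: cs) = (Polynomial.X + Polynomial.C c) * listPoly cs := by
      simp [listPoly]
    have hev : iterLop cs f =ᶠ[nhds x] fun y =>
        ∑ i ∈ Finset.range (cs.length + 1), (listPoly cs).coeff i * eulerT f i y := by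
      filter_upwards [hs.mem_nhds hx] with y hy using ih y hy
    have hder : deriv (iterLop cs f) x =
        ∑ i ∈ Finset.range (cs.length + 1), (listPoly cs).coeff i * deriv (eulerT f i) x := by
      rw [hev.deriv_eq]
      exact (HasDerivAt.fun_sum (fun i _ =>
        ((eulerT_hasDeriv f i x (hf x hx)).1.hasDerivAt.const_mul _))).deriv
    have h0 : iterLop (c :: cs) f x = x * deriv (iterLop cs f) x + c * iterLop cs f x := rfl
    rw [h0, hder, ih x hx, hP, List.length_cons, Finset.sum_range_succ' _ (cs.length + 1),
      Finset.mul_sum]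
    have e1 : ∀ i ∈ Finset.range (cs.length + 1),
        x * ((listPoly cs).coeff i * deriv (eulerT f i) x) =
        (listPoly cs).coeff i * eulerT f (i + 1) x := by
      intro i _
      rw [← (eulerT_hasDeriv f i x (hf x hx)).2]; ring
    have e2 : ∀ i ∈ Finset.range (cs.length + 1),
        ((Polynomial.X + Polynomial.C c) * listPoly cs).coeff (i + 1) * eulerT f (i + 1) x =
        (listPoly cs).coeff i * eulerT f (i + 1) x +
        c * ((listPoly cs).coeff (i + 1) * eulerT f (i + 1) x) := by
      intro i _
      rw [add_mul, Polynomial.coeff_add, Polynomial.coeff_X_mul, Polynomial.coeff_C_mul]; ring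
    rw [Finset.sum_congr rfl e1, Finset.sum_congr rfl e2, Finset.sum_add_distrib,
      ← Finset.mul_sum]
    have e3 := Finset.sum_range_succ'
      (fun i => (listPoly cs).coeff i * eulerT f i x) (cs.length + 1)
    rw [Finset.sum_range_succ, Polynomial.coeff_eq_zero_of_natDegree_lt
      (Nat.lt_succ_of_le (listPoly_natDegree cs)), zero_mul, add_zero] at e3
    rw [e3, add_mul, Polynomial.coeff_add, Polynomial.coeff_C_mul]
    simp
    ring

theorem listPoly_coeff {m : ℕ} (z : Fin m → ℝ) (i : ℕ) (hi : i ≤ m) :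
    (listPoly (List.ofFn z)).coeff i = esym (m - i) z := by
  have h := Multiset.prod_X_add_C_coeff' (Finset.univ : Finset (Fin m)).val z (k := i)
    (by simpa using hi)
  rw [Finset.esymm_map_val] at h
  have h2 : listPoly (List.ofFn z) =
      (Multiset.map (fun i => Polynomial.X + Polynomial.C (z i))
        (Finset.univ : Finset (Fin m)).val).prod := by
    rw [listPoly, List.map_ofFn, List.prod_ofFn]
    rfl
  rw [h2, h]
  simp [esym]

/-- For `f` smooth on an open interval `I ⊆ (0,∞)`,
    `(L_{1-u₁} ∘ ⋯ ∘ L_{1-uₘ} f)(x) = Σ_{j=0}^m a_j xʲ f⁽ʲ⁾(x)` where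
    `a_j = Σ_{i=j}^m S(i,j) e_{m-i}(1-u₁, …, 1-uₘ)`. -/
theorem iterLop_eq_sum (m : ℕ) (hm : 1 ≤ m) (u : Fin m → ℝ)
    (a b : ℝ) (ha : 0 ≤ a)
    (f : ℝ → ℝ) (hf : ContDiffOn ℝ (⊤ : ℕ∞) f (Set.Ioo a b)) :
    ∀ x ∈ Set.Ioo a b,
      iterLop (List.ofFn fun i => 1 - u i) f x =
        ∑ j ∈ Finset.range (m + 1),
          (∑ i ∈ Finset.Icc j m, (stirling2 i j : ℝ) * esym (m - i) (fun t => 1 - u t)) *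
            x ^ j * iteratedDeriv j f x := by
  intro x hx
  rw [iterLop_expand f (Set.Ioo a b) isOpen_Ioo
    (fun y hy => hf.contDiffAt (isOpen_Ioo.mem_nhds hy)) _ x hx, List.length_ofFn]
  have e1 : ∀ i ∈ Finset.range (m + 1),
      (listPoly (List.ofFn fun i => 1 - u i)).coeff i * eulerT f i x =
      ∑ j ∈ Finset.range (i + 1), (stirling2 i j : ℝ) * esym (m - i) (fun t => 1 - u t) *
        x ^ j * iteratedDeriv j f x := by
    intro i hi
    rw [listPoly_coeff _ i (by simpa [Nat.lt_succ_iff] using hi), eulerT, Finset.mul_sum]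
    exact Finset.sum_congr rfl fun j _ => by ring
  rw [Finset.sum_congr rfl e1]
  simp only [Finset.sum_mul]
  apply Finset.sum_comm'
  intro i j
  simp only [Finset.mem_range, Finset.mem_Icc]
  omega
end

section
/- Let m ≥ 1 and let u₁,…,u_m, v₁,…,v_m be real numbers. Define p(γ) = ∏_{i=1}^m (γ+1−u_i) and q(γ) = ∏_{i=1}^m (γ+2−v_i), and let a₀,…,a_m and b₀,…,b_m be the unique real numbers such that p(γ) = Σ_{j=0}^m (−1)ʲ a_j (−γ)_j and q(γ) = Σ_{j=0}^m (−1)ʲ b_j (−γ)_j for all real γ. Set q₁(γ) = (1+γ)q(γ) − γ·q(γ−1), and let ∇ be the backward difference operator ∇g(γ) = g(γ) − g(γ−1). Then for every 0 ≤ k ≤ m−1 and every real γ, Σ_{j=k}^m [C(j, j−k)·a_j − C(j+1, j−k)·b_j] · (−1)^{j−k} (k−γ)_{j−k} = (1/k!)·(∇^k p)(γ) − (1/(k+1)!)·(∇^k q₁)(γ), where C(n,r) denotes the binomial coefficient. -/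
open Polynomial

/-- The backward difference operator `∇ g (γ) = g(γ) - g(γ-1)`. -/
def nabla (g : ℝ → ℝ) : ℝ → ℝ := fun c => g c - g (c - 1)

noncomputable def fallF (j : ℕ) (x : ℝ) : ℝ := (-1) ^ j * (ascPochhammer ℝ j).eval (-x)

lemma fallF_succ_right (j : ℕ) (x : ℝ) : fallF (j + 1) x = fallF j x * (x - j) := by
  simp only [fallF, ascPochhammer_succ_eval]; ring

lemma fallF_succ_left (j : ℕ) (x : ℝ) : fallF (j + 1) x = x * fallF j (x - 1) := by
  induction j with
  | zero => simp [fallF]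
  | succ j ih =>
    rw [fallF_succ_right, ih, fallF_succ_right j (x - 1)]; push_cast; ring

lemma fallF_nabla (n : ℕ) (x : ℝ) :
    fallF n x - fallF n (x - 1) = n * fallF (n - 1) (x - 1) := by
  cases n with
  | zero => simp [fallF]
  | succ n =>
    rw [fallF_succ_left, fallF_succ_right n (x - 1)]
    simp only [Nat.add_sub_cancel]; push_cast; ring

lemma fallF_q (n : ℕ) (x : ℝ) :
    (1 + x) * fallF n x - x * fallF n (x - 1) = (n + 1) * fallF n x := by
  rw [← fallF_succ_left, fallF_succ_right]; ring

lemma nabla_iter (m : ℕ) (c : ℕ → ℝ) (k : ℕ) :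
    nabla^[k] (fun x => ∑ j ∈ Finset.range (m + 1), c j * fallF j x) =
      fun x => ∑ j ∈ Finset.range (m + 1),
        c j * (j.descFactorial k : ℝ) * fallF (j - k) (x - k) := by
  induction k with
  | zero => simp
  | succ k ih =>
    rw [Function.iterate_succ_apply', ih]
    funext x
    simp only [nabla]
    rw [← Finset.sum_sub_distrib]
    refine Finset.sum_congr rfl fun j _ => ?_
    have h := fallF_nabla (j - k) (x - k)
    rw [← mul_sub, show x - 1 - (k : ℝ) = x - k - 1 by ring, h, Nat.descFactorial_succ]
    push_cast
    rw [Nat.sub_sub, show x - ((k : ℝ) + 1) = x - k - 1 by ring]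
    ring

lemma sum_restrict (m k : ℕ) (f : ℕ → ℝ) (h : ∀ j < k, f j = 0) :
    ∑ j ∈ Finset.range (m + 1), f j = ∑ j ∈ Finset.Icc k m, f j := by
  symm
  apply Finset.sum_subset
  · intro j hj
    simp only [Finset.mem_Icc, Finset.mem_range] at *
    omega
  · intro j hj hj'
    simp only [Finset.mem_Icc, Finset.mem_range] at *
    exact h j (by omega)

/-- With `p(γ) = ∏ (γ+1-uᵢ)`, `q(γ) = ∏ (γ+2-vᵢ)` expanded as
    `p(γ) = Σⱼ (−1)ʲ aⱼ (−γ)ⱼ`, `q(γ) = Σⱼ (−1)ʲ bⱼ (−γ)ⱼ`, and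
    `q₁(γ) = (1+γ)q(γ) − γ q(γ−1)`, for `0 ≤ k ≤ m−1`:
    `Σ_{j=k}^m [C(j,j−k) aⱼ − C(j+1,j−k) bⱼ] (−1)^{j−k} (k−γ)_{j−k}
      = (1/k!) ∇ᵏp(γ) − (1/(k+1)!) ∇ᵏq₁(γ)`. -/
theorem R_prime_eq (m : ℕ) (hm : 1 ≤ m) (u v : Fin m → ℝ) (a b : ℕ → ℝ)
    (p q : ℝ → ℝ)
    (hp : ∀ γ : ℝ, p γ = ∏ i, (γ + 1 - u i))
    (hq : ∀ γ : ℝ, q γ = ∏ i, (γ + 2 - v i))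
    (ha : ∀ γ : ℝ, p γ = ∑ j ∈ Finset.range (m + 1),
      (-1) ^ j * a j * (ascPochhammer ℝ j).eval (-γ))
    (hb : ∀ γ : ℝ, q γ = ∑ j ∈ Finset.range (m + 1),
      (-1) ^ j * b j * (ascPochhammer ℝ j).eval (-γ)) :
    ∀ k : ℕ, k + 1 ≤ m → ∀ γ : ℝ,
      ∑ j ∈ Finset.Icc k m,
          ((j.choose (j - k) : ℝ) * a j - ((j + 1).choose (j - k) : ℝ) * b j) *
            (-1) ^ (j - k) * (ascPochhammer ℝ (j - k)).eval ((k : ℝ) - γ) =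
        (1 / (k.factorial : ℝ)) * (nabla^[k] p) γ -
          (1 / ((k + 1).factorial : ℝ)) *
            (nabla^[k] fun γ => (1 + γ) * q γ - γ * q (γ - 1)) γ := by
  intro k _ γ
  have hp' : p = fun x => ∑ j ∈ Finset.range (m + 1), a j * fallF j x := by
    funext x
    rw [ha x]
    refine Finset.sum_congr rfl fun j _ => ?_
    simp only [fallF]; ring
  have hq' : ∀ x, q x = ∑ j ∈ Finset.range (m + 1), b j * fallF j x := by
    intro x
    rw [hb x]
    refine Finset.sum_congr rfl fun j _ => ?_
    simp only [fallF]; ring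
  have hq1 : (fun γ => (1 + γ) * q γ - γ * q (γ - 1)) =
      fun x => ∑ j ∈ Finset.range (m + 1), (b j * (j + 1)) * fallF j x := by
    funext x
    rw [hq', hq', Finset.mul_sum, Finset.mul_sum, ← Finset.sum_sub_distrib]
    refine Finset.sum_congr rfl fun j _ => ?_
    linear_combination b j * fallF_q j x
  rw [hq1, hp', nabla_iter, nabla_iter]
  simp only []
  rw [Finset.mul_sum, Finset.mul_sum, ← Finset.sum_sub_distrib, sum_restrict m k]
  · refine Finset.sum_congr rfl fun j hj => ?_
    have hkj : k ≤ j := (Finset.mem_Icc.mp hj).1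
    have e1 : (j.choose (j - k) : ℝ) = 1 / (k.factorial : ℝ) * j.descFactorial k := by
      rw [Nat.choose_symm hkj, Nat.descFactorial_eq_factorial_mul_choose]
      have := Nat.factorial_ne_zero k
      push_cast
      field_simp
    have e2 : ((j + 1).choose (j - k) : ℝ) =
        1 / ((k + 1).factorial : ℝ) * ((j + 1) * j.descFactorial k) := by
      have h1 : (j + 1).choose (j - k) = (j + 1).choose (k + 1) := by
        rw [← Nat.choose_symm (show k + 1 ≤ j + 1 by omega)]
        congr 1; omega
      have h2 := Nat.succ_descFactorial_succ j k
      rw [Nat.descFactorial_eq_factorial_mul_choose] at h2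
      have h3 : ((k + 1).factorial : ℝ) * ((j + 1).choose (k + 1) : ℝ) =
        (j + 1) * j.descFactorial k := by exact_mod_cast h2
      have h4 : ((k + 1).factorial : ℝ) ≠ 0 := by exact_mod_cast Nat.factorial_ne_zero (k + 1)
      rw [h1, ← h3, one_div, inv_mul_cancel_left₀ h4]
    rw [e1, e2]
    simp only [fallF, neg_sub]
    ring
  · intro j hj
    simp [Nat.descFactorial_eq_zero_iff_lt.mpr hj]
end

section
/- Let m ≥ 1 and let u₁,…,u_m, v₁,…,v_m be real numbers with v_i > u_i > 0 for each i. Then there exists a probability density function f on [0,1] (a nonnegative integrable function with ∫₀¹ f = 1) whose moment sequence is ∫₀¹ xⁿ f(x) dx = ∏_{i=1}^m (u_i)_n/(v_i)_n for every natural number n. -/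
open MeasureTheory Polynomial

lemma gamma_add_nat_aux (z : ℝ) (hz : 0 < z) (n : ℕ) :
    Real.Gamma (z + n) = (ascPochhammer ℝ n).eval z * Real.Gamma z := by
  induction n with
  | zero => simp
  | succ k ih =>
    have h : (0:ℝ) < z + k := by positivity
    rw [ascPochhammer_succ_eval]
    push_cast
    rw [← add_assoc, Real.Gamma_add_one h.ne', ih]
    ring

lemma integral_betaPDFReal_aux (a b : ℝ) (ha : 0 < a) (hb : 0 < b) :
    ∫ x, ProbabilityTheory.betaPDFReal a b x = 1 := by
  have h := ProbabilityTheory.lintegral_betaPDF_eq_one ha hb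
  rw [integral_eq_lintegral_of_nonneg_ae]
  · unfold ProbabilityTheory.betaPDF at h
    rw [h]; simp
  · refine Filter.Eventually.of_forall fun x => ?_
    by_cases hx : 0 < x ∧ x < 1
    · exact (ProbabilityTheory.betaPDFReal_pos hx.1 hx.2 ha hb).le
    · simp [ProbabilityTheory.betaPDFReal, hx]
  · exact (ProbabilityTheory.measurable_betaPDFReal a b).aestronglyMeasurable

lemma measurable_betaPDF_aux (a b : ℝ) : Measurable (ProbabilityTheory.betaPDF a b) :=
  (ProbabilityTheory.measurable_betaPDFReal a b).ennreal_ofReal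

lemma beta_moment_aux (u b : ℝ) (hu : 0 < u) (hb : 0 < b) (n : ℕ) :
    ∫ x, x ^ n ∂(ProbabilityTheory.betaMeasure u b) =
      (ascPochhammer ℝ n).eval u / (ascPochhammer ℝ n).eval (u + b) := by
  have hun : 0 < u + n := by positivity
  rw [ProbabilityTheory.betaMeasure, integral_withDensity_eq_integral_toReal_smul
    (measurable_betaPDF_aux u b)
    (Filter.Eventually.of_forall fun x => by simp [ProbabilityTheory.betaPDF])]
  have key : ∀ x : ℝ, (ProbabilityTheory.betaPDF u b x).toReal • x ^ n =
      (ProbabilityTheory.beta (u + n) b / ProbabilityTheory.beta u b) *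
        ProbabilityTheory.betaPDFReal (u + n) b x := by
    intro x
    by_cases hx : 0 < x ∧ x < 1
    · rw [ProbabilityTheory.betaPDF, ENNReal.toReal_ofReal
        (ProbabilityTheory.betaPDFReal_pos hx.1 hx.2 hu hb).le]
      simp only [ProbabilityTheory.betaPDFReal, hx, smul_eq_mul]
      have h1 := (ProbabilityTheory.beta_pos hu hb).ne'
      have h2 := (ProbabilityTheory.beta_pos hun hb).ne'
      have h3 : x ^ (u + n - 1) = x ^ (u - 1) * x ^ n := by
        rw [← Real.rpow_natCast, ← Real.rpow_add hx.1]; congr 1; ring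
      rw [h3]
      simp
      field_simp
    · simp [ProbabilityTheory.betaPDF, ProbabilityTheory.betaPDFReal, hx]
  simp_rw [key]
  rw [integral_const_mul, integral_betaPDFReal_aux _ _ hun hb, mul_one]
  unfold ProbabilityTheory.beta
  have e : u + n + b = (u + b) + n := by ring
  rw [e, gamma_add_nat_aux u hu, gamma_add_nat_aux (u + b) (by positivity)]
  have g1 := (Real.Gamma_pos_of_pos hu).ne'
  have g2 := (Real.Gamma_pos_of_pos hb).ne'
  have g3 := (Real.Gamma_pos_of_pos (add_pos hu hb)).ne'
  have g4 := (ascPochhammer_pos n (u + b) (add_pos hu hb)).ne'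
  field_simp

lemma beta_support_aux (u b : ℝ) :
    ∀ᵐ x ∂(ProbabilityTheory.betaMeasure u b), x ∈ Set.Ioc (0:ℝ) 1 := by
  rw [ProbabilityTheory.betaMeasure, ae_withDensity_iff (measurable_betaPDF_aux u b)]
  refine Filter.Eventually.of_forall fun x hx => ?_
  by_contra h
  apply hx
  rw [Set.mem_Ioc, not_and_or] at h
  rcases h with h | h
  · exact ProbabilityTheory.betaPDF_eq_zero_of_nonpos (not_lt.mp h)
  · exact ProbabilityTheory.betaPDF_eq_zero_of_one_le (not_le.mp h).le

lemma mconv_ac_aux (μ ν : Measure ℝ) [SFinite ν] (hν : ν ≪ volume)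
    (hμ : ∀ᵐ x ∂μ, x ∈ Set.Ioc (0:ℝ) 1) : μ ∗ₘ ν ≪ volume := by
  refine Measure.AbsolutelyContinuous.mk fun s hs h => ?_
  rw [Measure.mconv, Measure.map_apply (by fun_prop) hs,
    Measure.prod_apply ((by fun_prop : Measurable fun x : ℝ × ℝ => x.1 * x.2) hs)]
  rw [lintegral_eq_zero_iff' (by
    exact (measurable_measure_prodMk_left
      ((by fun_prop : Measurable fun x : ℝ × ℝ => x.1 * x.2) hs)).aemeasurable)]
  filter_upwards [hμ] with x hx
  apply hν
  have : (Prod.mk x ⁻¹' ((fun x : ℝ × ℝ => x.1 * x.2) ⁻¹' s)) = (fun y => x * y) ⁻¹' s := rfl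
  rw [this, Real.volume_preimage_mul_left hx.1.ne', h, mul_zero]

lemma exists_measure_aux (m : ℕ) (u v : Fin m → ℝ) (huv : ∀ i, 0 < u i ∧ u i < v i) :
    ∃ μ : Measure ℝ, IsProbabilityMeasure μ ∧ (∀ᵐ x ∂μ, x ∈ Set.Ioc (0:ℝ) 1) ∧
      (1 ≤ m → μ ≪ volume) ∧
      ∀ n : ℕ, ∫ x, x ^ n ∂μ =
        ∏ i, (ascPochhammer ℝ n).eval (u i) / (ascPochhammer ℝ n).eval (v i) := by
  induction m with
  | zero =>
    refine ⟨Measure.dirac 1, inferInstance, ?_, by simp, by simp⟩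
    simp
  | succ k ih =>
    obtain ⟨μ, hμ, hs, -, hm⟩ := ih (fun i => u i.succ) (fun i => v i.succ) (fun i => huv _)
    have hu := (huv 0).1
    have hb : 0 < v 0 - u 0 := sub_pos.mpr (huv 0).2
    have hνp := ProbabilityTheory.isProbabilityMeasureBeta hu hb
    have hνs := beta_support_aux (u 0) (v 0 - u 0)
    have hνm := beta_moment_aux (u 0) (v 0 - u 0) hu hb
    have hνa : ProbabilityTheory.betaMeasure (u 0) (v 0 - u 0) ≪ volume :=
      withDensity_absolutelyContinuous _ _
    generalize ProbabilityTheory.betaMeasure (u 0) (v 0 - u 0) = ν at *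
    refine ⟨μ ∗ₘ ν, inferInstance, ?_, fun _ => mconv_ac_aux μ ν hνa hs, fun n => ?_⟩
    · rw [Measure.mconv]
      refine (ae_map_iff (p := fun x : ℝ => x ∈ Set.Ioc (0:ℝ) 1) (by fun_prop)
        measurableSet_Ioc).2 ?_
      filter_upwards [Measure.quasiMeasurePreserving_fst.ae hs,
        Measure.quasiMeasurePreserving_snd.ae hνs] with p h1 h2
      exact ⟨mul_pos h1.1 h2.1, mul_le_one₀ h1.2 h2.1.le h2.2⟩
    · rw [Measure.mconv, integral_map (by fun_prop) (by fun_prop)]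
      simp_rw [mul_pow]
      rw [integral_prod_mul (fun x : ℝ => x ^ n) (fun x : ℝ => x ^ n), hm, hνm, Fin.prod_univ_succ,
        mul_comm]
      simp

/-- For `vᵢ > uᵢ > 0` there exists a probability density on `[0,1]` with moment
    sequence `∏ᵢ (uᵢ)ₙ/(vᵢ)ₙ`. -/
theorem exists_density_with_pochhammer_moments (m : ℕ) (hm : 1 ≤ m)
    (u v : Fin m → ℝ) (huv : ∀ i, 0 < u i ∧ u i < v i) :
    ∃ f : ℝ → ℝ,
      (∀ x ∈ Set.Icc (0:ℝ) 1, 0 ≤ f x) ∧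
      IntegrableOn f (Set.Icc (0:ℝ) 1) ∧
      (∫ x in (0:ℝ)..1, f x) = 1 ∧
      ∀ n : ℕ, ∫ x in (0:ℝ)..1, x ^ n * f x =
        ∏ i, (ascPochhammer ℝ n).eval (u i) / (ascPochhammer ℝ n).eval (v i) := by
  obtain ⟨μ, hμ, hs, ha, hmom⟩ := exists_measure_aux m u v huv
  have hac := ha hm
  have main : ∀ n : ℕ, ∫ x in (0:ℝ)..1, x ^ n * (μ.rnDeriv volume x).toReal =
        ∏ i, (ascPochhammer ℝ n).eval (u i) / (ascPochhammer ℝ n).eval (v i) := by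
    intro n
    rw [← hmom n, intervalIntegral.integral_of_le zero_le_one]
    have h1 : ∫ x, x ^ n ∂μ = ∫ x in Set.Ioc (0:ℝ) 1, x ^ n ∂μ := by
      rw [Measure.restrict_eq_self_of_ae_mem hs]
    rw [h1, ← setIntegral_rnDeriv_smul hac measurableSet_Ioc]
    simp [mul_comm]
  refine ⟨fun x => (μ.rnDeriv volume x).toReal, fun x _ => ENNReal.toReal_nonneg,
    Measure.integrable_toReal_rnDeriv.integrableOn, ?_, main⟩
  simpa using main 0
end

section
/- The maximum of the function x ↦ ∏_{1≤i<j≤4} (x_i − x_j)² over the unit sphere S = {x ∈ ℝ⁴ : x₁² + x₂² + x₃² + x₄² = 1} equals 1/108; that is, ∏_{1≤i<j≤4}(x_i−x_j)² ≤ 1/108 for all x ∈ S, and there exists x ∈ S achieving equality (the maximizers are the 24 points whose coordinates are permutations of {±(1/6)√(9+3√6), ±(1/6)√(9−3√6)}). -/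
/-- The bound in terms of the coefficients of the quartic. -/
theorem disc_coeff_bound (u q r : ℝ) (hu0 : 0 ≤ u) (hr16 : r ≤ u ^ 2 / 16) :
    u ^ 4 * r + u ^ 3 / 2 * q ^ 2 - 32 * u ^ 2 * r ^ 2 - 72 * u * q ^ 2 * r
        - 27 * q ^ 4 + 256 * r ^ 3 ≤ u ^ 6 / 108 := by
  rcases le_total (144 * r) (u ^ 2) with h | h
  · have hI : (12 * r + u ^ 2 / 4) ^ 3 ≤ (u ^ 2 / 3) ^ 3 :=
      (Odd.strictMono_pow (by decide : Odd 3)).monotone (by linarith)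
    have h6 : 0 ≤ u ^ 6 := by positivity
    nlinarith [sq_nonneg (-36 * u * r + u ^ 3 / 4 - 27 * q ^ 2)]
  · have h1 : 0 ≤ u / 2 * q ^ 2 * (144 * r - u ^ 2) :=
      mul_nonneg (by positivity) (by linarith)
    have h2 : 0 ≤ (r - u ^ 2 / 48) ^ 2 * (u ^ 2 / 12 - r) :=
      mul_nonneg (by positivity) (by nlinarith [sq_nonneg u])
    have h3 : 0 ≤ q ^ 4 := by positivity
    nlinarith

/-- Centered, homogeneous version of the bound. -/
theorem disc_centered (a b c d u : ℝ) (h0 : a + b + c + d = 0)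
    (hu : u = a ^ 2 + b ^ 2 + c ^ 2 + d ^ 2) :
    (a - b) ^ 2 * (a - c) ^ 2 * (a - d) ^ 2 * (b - c) ^ 2 * (b - d) ^ 2 * (c - d) ^ 2
      ≤ u ^ 6 / 108 := by
  have hu0 : 0 ≤ u := by rw [hu]; positivity
  obtain ⟨r, hr⟩ : ∃ r, r = a * b * c * d := ⟨_, rfl⟩
  obtain ⟨q, hq⟩ : ∃ q, q = a * b * c + a * b * d + a * c * d + b * c * d := ⟨_, rfl⟩
  have hd : d = -(a + b + c) := by linarith
  have hD : (a - b) ^ 2 * (a - c) ^ 2 * (a - d) ^ 2 * (b - c) ^ 2 * (b - d) ^ 2 * (c - d) ^ 2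
      = u ^ 4 * r + u ^ 3 / 2 * q ^ 2 - 32 * u ^ 2 * r ^ 2 - 72 * u * q ^ 2 * r
        - 27 * q ^ 4 + 256 * r ^ 3 := by
    rw [hu, hr, hq, hd]; ring
  have hr16 : r ≤ u ^ 2 / 16 := by
    rw [hr, hu]
    have e : (a ^ 2 + b ^ 2 + c ^ 2 + d ^ 2) ^ 2 / 16 - a * b * c * d
        = ((a ^ 2 + b ^ 2 - c ^ 2 - d ^ 2) ^ 2 + 4 * (a * c - b * d) ^ 2
          + 4 * (a * d - b * c) ^ 2) / 16 := by ring
    have e' : 0 ≤ ((a ^ 2 + b ^ 2 - c ^ 2 - d ^ 2) ^ 2 + 4 * (a * c - b * d) ^ 2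
          + 4 * (a * d - b * c) ^ 2) / 16 := by positivity
    exact sub_nonneg.mp (e ▸ e')
  rw [hD]
  exact disc_coeff_bound u q r hu0 hr16

theorem prod_pairs (x : Fin 4 → ℝ) :
    (∏ p ∈ Finset.univ.filter (fun p : Fin 4 × Fin 4 => p.1 < p.2), (x p.1 - x p.2) ^ 2)
    = (x 0 - x 1) ^ 2 * (x 0 - x 2) ^ 2 * (x 0 - x 3) ^ 2 * (x 1 - x 2) ^ 2
      * (x 1 - x 3) ^ 2 * (x 2 - x 3) ^ 2 := by
  have : Finset.univ.filter (fun p : Fin 4 × Fin 4 => p.1 < p.2)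
      = {(0, 1), (0, 2), (0, 3), (1, 2), (1, 3), (2, 3)} := by decide
  rw [this]
  repeat rw [Finset.prod_insert (by decide)]
  rw [Finset.prod_singleton]
  ring

/-- The maximum of `∏_{1≤i<j≤4} (xᵢ−xⱼ)²` over the unit sphere of `ℝ⁴`
    equals `1/108`. -/
theorem max_discriminant_on_sphere :
    (∀ x : Fin 4 → ℝ, (∑ i, x i ^ 2) = 1 →
      (∏ p ∈ Finset.univ.filter (fun p : Fin 4 × Fin 4 => p.1 < p.2),
        (x p.1 - x p.2) ^ 2) ≤ 1 / 108) ∧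
    ∃ x : Fin 4 → ℝ, (∑ i, x i ^ 2) = 1 ∧
      (∏ p ∈ Finset.univ.filter (fun p : Fin 4 × Fin 4 => p.1 < p.2),
        (x p.1 - x p.2) ^ 2) = 1 / 108 := by
  constructor
  · intro x hx
    rw [prod_pairs]
    rw [Fin.sum_univ_four] at hx
    obtain ⟨m, hm⟩ : ∃ m, m = (x 0 + x 1 + x 2 + x 3) / 4 := ⟨_, rfl⟩
    obtain ⟨u, hu⟩ : ∃ u, u = (x 0 - m) ^ 2 + (x 1 - m) ^ 2 + (x 2 - m) ^ 2 + (x 3 - m) ^ 2 :=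
      ⟨_, rfl⟩
    have key := disc_centered (x 0 - m) (x 1 - m) (x 2 - m) (x 3 - m) u (by rw [hm]; ring) hu
    simp only [sub_sub_sub_cancel_right] at key
    refine key.trans ?_
    have hu1 : u = 1 - 4 * m ^ 2 := by rw [hu, ← hx, hm]; ring
    have hle : u ≤ 1 := by linarith [sq_nonneg m]
    have hu0 : 0 ≤ u := by rw [hu]; positivity
    have h6 : u ^ 6 ≤ 1 := pow_le_one₀ hu0 hle
    clear key hu hu1
    linarith
  · have h6 : Real.sqrt 6 ^ 2 = 6 := Real.sq_sqrt (by norm_num)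
    have h60 : 0 ≤ Real.sqrt 6 := Real.sqrt_nonneg 6
    have h63 : Real.sqrt 6 ≤ 3 := by nlinarith
    obtain ⟨s, hs⟩ : ∃ s, s = Real.sqrt 6 := ⟨_, rfl⟩
    rw [← hs] at h6 h60 h63
    obtain ⟨a, ha⟩ : ∃ a : ℝ, a ^ 2 = (9 + 3 * s) / 36 :=
      ⟨Real.sqrt ((9 + 3 * s) / 36), Real.sq_sqrt (by linarith)⟩
    obtain ⟨b, hb⟩ : ∃ b : ℝ, b ^ 2 = (9 - 3 * s) / 36 :=
      ⟨Real.sqrt ((9 - 3 * s) / 36), Real.sq_sqrt (by linarith)⟩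
    refine ⟨![a, b, -b, -a], ?_, ?_⟩
    · simp [Fin.sum_univ_four]
      linarith
    · rw [prod_pairs]
      simp only [Matrix.cons_val]
      have e : (a - b) ^ 2 * (a - -b) ^ 2 * (a - -a) ^ 2 * (b - -b) ^ 2 * (b - -a) ^ 2
        * (-b - -a) ^ 2 = 16 * (a ^ 2 * b ^ 2) * ((a ^ 2 - b ^ 2) ^ 2) ^ 2 := by ring
      have e1 : a ^ 2 * b ^ 2 = 1 / 48 := by rw [ha, hb]; linear_combination (-1 / 144) * h6
      have e2 : (a ^ 2 - b ^ 2) ^ 2 = 1 / 6 := by rw [ha, hb]; linear_combination (1 / 36) * h6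
      rw [e, e1, e2]; norm_num
end

section
/- Let S = {x ∈ ℝ⁴ : x₁²+x₂²+x₃²+x₄² = 1} be the 3-dimensional unit sphere with its normalized surface (rotation-invariant probability) measure ω. Then for every real κ ≥ 0, ∫_S ∏_{1≤i<j≤4} |x_i − x_j|^{2κ} dω(x) = 2^{−6κ} · Γ(1+2κ) Γ(1+3κ) Γ(1+4κ) / (Γ(2+6κ) Γ(1+κ)³). -/
open MeasureTheory

namespace MMS
open Filter Topology

/-- multiplicative log-convexity on `[0,∞)` -/
def LC (f : ℝ → ℝ) : Prop := ∀ x y a b : ℝ, 0 ≤ x → 0 ≤ y → 0 < a → 0 < b → a + b = 1 →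
  f (a * x + b * y) ≤ f x ^ a * f y ^ b

lemma LC.mul {f g : ℝ → ℝ} (hf : LC f) (hg : LC g) (pf : ∀ x, 0 ≤ x → 0 < f x)
    (pg : ∀ x, 0 ≤ x → 0 < g x) : LC (fun x => f x * g x) := by
  intro x y a b hx hy ha hb hab
  have h1 := hf x y a b hx hy ha hb hab
  have h2 := hg x y a b hx hy ha hb hab
  have hz : 0 ≤ a * x + b * y := by positivity
  have := pf x hx; have := pf y hy; have := pg x hx; have := pg y hy
  have := pg _ hz
  calc f (a * x + b * y) * g (a * x + b * y)
      ≤ (f x ^ a * f y ^ b) * (g x ^ a * g y ^ b) := by gcongr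
    _ = _ := by
      rw [Real.mul_rpow (by positivity) (by positivity), Real.mul_rpow (by positivity) (by positivity)]
      ring

lemma LC_Gamma (j : ℝ) (hj : 0 ≤ j) : LC (fun x => Real.Gamma (1 + j * x)) := by
  intro x y a b hx hy ha hb hab
  have := Real.Gamma_mul_add_mul_le_rpow_Gamma_mul_rpow_Gamma (s := 1 + j * x) (t := 1 + j * y)
    (by positivity) (by positivity) ha hb hab
  have e : 1 + j * (a * x + b * y) = a * (1 + j * x) + b * (1 + j * y) := by linear_combination -hab
  simpa only [e] using this

lemma nat_eq {f₁ f₂ g : ℝ → ℝ} (r₁ : ∀ x, 0 ≤ x → f₁ (x + 1) = g x * f₁ x)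
    (r₂ : ∀ x, 0 ≤ x → f₂ (x + 1) = g x * f₂ x) (s : ℝ) (hs : 0 ≤ s) (n : ℕ) :
    f₁ (n + s) * f₂ s = f₂ (n + s) * f₁ s := by
  induction n with
  | zero => simp [mul_comm]
  | succ n ih =>
    have e : ((n + 1 : ℕ) : ℝ) + s = (n + s) + 1 := by push_cast; ring
    rw [e, r₁ _ (by positivity), r₂ _ (by positivity)]
    linear_combination g (n + s) * ih

lemma sandwich {f g : ℝ → ℝ} (h : LC f) (pf : ∀ x, 0 ≤ x → 0 < f x) (pg : ∀ x, 0 ≤ x → 0 < g x)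
    (r : ∀ x, 0 ≤ x → f (x + 1) = g x * f x) (s : ℝ) (hs : 0 < s) (hs1 : s < 1) (n : ℕ) :
    f (n + 1) * g (n + s) ^ s ≤ f ((n + 1 : ℕ) + s) ∧
      f ((n + 1 : ℕ) + s) ≤ f (n + 1) * g (n + 1) ^ s := by
  constructor
  · have h1 := h (n + s) ((n + s) + 1) s (1 - s) (by positivity) (by positivity) hs (by linarith) (by ring)
    have e : s * (n + s) + (1 - s) * ((n + s) + 1) = (n : ℝ) + 1 := by ring
    rw [e] at h1
    have e2 : ((n + 1 : ℕ) : ℝ) + s = (n + s) + 1 := by push_cast; ring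
    rw [e2]
    have hp := pf (n + s) (by positivity)
    have hg := pg (n + s) (by positivity)
    have hr := r (n + s) (by positivity)
    have e3 : f (n + s) ^ s * f (n + s + 1) ^ (1 - s) * g (n + s) ^ s = f (n + s + 1) := by
      rw [hr, Real.mul_rpow hg.le hp.le]
      calc _ = (f (n + s) ^ s * f (n + s) ^ (1 - s)) * (g (n + s) ^ (1 - s) * g (n + s) ^ s) := by ring
        _ = _ := by
          rw [← Real.rpow_add hp, ← Real.rpow_add hg]; simp [mul_comm]
    rw [← e3]
    gcongr
  · have h1 := h (n + 1) ((n + 1) + 1) (1 - s) s (by positivity) (by positivity) (by linarith) hs (by ring)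
    have e : (1 - s) * (n + 1) + s * ((n + 1) + 1) = ((n + 1 : ℕ) : ℝ) + s := by push_cast; ring
    rw [e] at h1
    have hp := pf (n + 1) (by positivity)
    have hg := pg (n + 1) (by positivity)
    rw [r ((n:ℝ) + 1) (by positivity), Real.mul_rpow hg.le hp.le] at h1
    refine h1.trans (le_of_eq ?_)
    calc _ = (f (n + 1) ^ (1 - s) * f (n + 1) ^ s) * g (n + 1) ^ s := by ring
      _ = _ := by rw [← Real.rpow_add hp]; simp

lemma bm_le {f₁ f₂ g : ℝ → ℝ} (h₁ : LC f₁) (h₂ : LC f₂) (p₁ : ∀ x, 0 ≤ x → 0 < f₁ x)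
    (p₂ : ∀ x, 0 ≤ x → 0 < f₂ x) (pg : ∀ x, 0 ≤ x → 0 < g x)
    (r₁ : ∀ x, 0 ≤ x → f₁ (x + 1) = g x * f₁ x)
    (r₂ : ∀ x, 0 ≤ x → f₂ (x + 1) = g x * f₂ x) (h0 : f₁ 0 = f₂ 0)
    (hg : ∀ s, 0 < s → s < 1 → Tendsto (fun n : ℕ => g (n + 1) / g (n + s)) atTop (𝓝 1))
    (s : ℝ) (hs : 0 < s) (hs1 : s < 1) : f₁ s ≤ f₂ s := by
  have hn : ∀ n : ℕ, f₁ n = f₂ n := by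
    intro n
    have := nat_eq r₁ r₂ 0 le_rfl n
    rw [h0] at this
    simpa using mul_right_cancel₀ (p₂ 0 le_rfl).ne' this
  have key : ∀ n : ℕ, f₁ s / f₂ s ≤ (g (n + 1) / g (n + s)) ^ s := by
    intro n
    have hq := nat_eq r₁ r₂ s hs.le (n + 1)
    have u := (sandwich h₁ p₁ pg r₁ s hs hs1 n).2
    have l := (sandwich h₂ p₂ pg r₂ s hs hs1 n).1
    have hn1 := hn (n + 1)
    push_cast at hn1 hq u l
    rw [hn1] at u
    have P := p₂ (n + 1) (by positivity)
    have G1 := pg (n + 1) (by positivity)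
    have G2 := pg (n + s) (by positivity)
    have F1 := p₂ s hs.le
    have F2 := p₂ (n + 1 + s) (by positivity)
    rw [Real.div_rpow G1.le G2.le]
    have e : f₁ s / f₂ s = f₁ (n + 1 + s) / f₂ (n + 1 + s) := by
      rw [div_eq_div_iff F1.ne' F2.ne']; linarith
    rw [e]
    have G3 : 0 < g (n + s) ^ s := by positivity
    calc _ ≤ (f₂ (n + 1) * g (n + 1) ^ s) / (f₂ (n + 1) * g (n + s) ^ s) := by gcongr
      _ = _ := by field_simp
  have lim : Tendsto (fun n : ℕ => (g (n + 1) / g (n + s)) ^ s) atTop (𝓝 1) := by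
    have := (hg s hs hs1).rpow_const (p := s) (Or.inl one_ne_zero)
    simpa using this
  have := ge_of_tendsto' lim key
  rwa [div_le_one (p₂ s hs.le)] at this

lemma bm {f₁ f₂ g : ℝ → ℝ} (h₁ : LC f₁) (h₂ : LC f₂) (p₁ : ∀ x, 0 ≤ x → 0 < f₁ x)
    (p₂ : ∀ x, 0 ≤ x → 0 < f₂ x) (pg : ∀ x, 0 ≤ x → 0 < g x)
    (r₁ : ∀ x, 0 ≤ x → f₁ (x + 1) = g x * f₁ x)
    (r₂ : ∀ x, 0 ≤ x → f₂ (x + 1) = g x * f₂ x) (h0 : f₁ 0 = f₂ 0)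
    (hg : ∀ s, 0 < s → s < 1 → Tendsto (fun n : ℕ => g (n + 1) / g (n + s)) atTop (𝓝 1))
    (x : ℝ) (hx : 0 ≤ x) : f₁ x = f₂ x := by
  have base : ∀ s, 0 ≤ s → s < 1 → f₁ s = f₂ s := by
    intro s hs hs1
    rcases hs.eq_or_lt with rfl | hs
    · exact h0
    · exact le_antisymm (bm_le h₁ h₂ p₁ p₂ pg r₁ r₂ h0 hg s hs hs1)
        (bm_le h₂ h₁ p₂ p₁ pg r₂ r₁ h0.symm hg s hs hs1)
  have hfr := base (Int.fract x) (Int.fract_nonneg x) (Int.fract_lt_one x)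
  have hq := nat_eq r₁ r₂ (Int.fract x) (Int.fract_nonneg x) ⌊x⌋₊
  have e : (⌊x⌋₊ : ℝ) + Int.fract x = x := by
    rw [natCast_floor_eq_intCast_floor hx]; exact Int.floor_add_fract x
  rw [e, hfr] at hq
  exact mul_right_cancel₀ (p₂ _ (Int.fract_nonneg x)).ne' hq

/-- the ratio function -/
noncomputable def gg (x : ℝ) : ℝ := (2*x+1)*(2*x+2)*((3*x+1)*(3*x+2)*(3*x+3))*
  ((4*x+1)*(4*x+2)*(4*x+3)*(4*x+4))

lemma gg_pos (x : ℝ) (hx : 0 ≤ x) : 0 < gg x := by unfold gg; positivity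

lemma lin_tendsto (j i s : ℝ) (hj : 0 < j) :
    Tendsto (fun n : ℕ => (j * ((n:ℝ) + 1) + i) / (j * ((n:ℝ) + s) + i)) atTop (𝓝 1) := by
  have h1 : Tendsto (fun n : ℕ => j * ((n:ℝ) + s) + i) atTop atTop := by
    apply tendsto_atTop_add_const_right
    apply Tendsto.const_mul_atTop hj
    exact tendsto_atTop_add_const_right _ _ tendsto_natCast_atTop_atTop
  have h2 : Tendsto (fun n : ℕ => 1 + (j * (1 - s)) / (j * ((n:ℝ) + s) + i)) atTop (𝓝 (1 + 0)) :=
    tendsto_const_nhds.add (tendsto_const_nhds.div_atTop h1)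
  rw [add_zero] at h2
  refine h2.congr' ?_
  filter_upwards [h1.eventually_gt_atTop 0] with n hn
  field_simp
  ring

lemma gg_tendsto (s : ℝ) :
    Tendsto (fun n : ℕ => gg (n + 1) / gg (n + s)) atTop (𝓝 1) := by
  have := ((lin_tendsto 2 1 s (by norm_num)).mul (lin_tendsto 2 2 s (by norm_num))).mul
    ((((lin_tendsto 3 1 s (by norm_num)).mul (lin_tendsto 3 2 s (by norm_num))).mul
      (lin_tendsto 3 3 s (by norm_num)))) |>.mul
    (((((lin_tendsto 4 1 s (by norm_num)).mul (lin_tendsto 4 2 s (by norm_num))).mul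
      (lin_tendsto 4 3 s (by norm_num)))).mul (lin_tendsto 4 4 s (by norm_num)))
  simp only [mul_one] at this
  refine this.congr fun n => ?_
  simp only [gg, div_mul_div_comm]

lemma Gprod_rec (x : ℝ) (hx : 0 ≤ x) :
    Real.Gamma (1 + 2 * (x+1)) * Real.Gamma (1 + 3 * (x+1)) * Real.Gamma (1 + 4 * (x+1)) =
    gg x * (Real.Gamma (1 + 2 * x) * Real.Gamma (1 + 3 * x) * Real.Gamma (1 + 4 * x)) := by
  have G : ∀ y : ℝ, 0 < y → Real.Gamma (y + 1) = y * Real.Gamma y :=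
    fun y hy => Real.Gamma_add_one hy.ne'
  have a2 : Real.Gamma (1 + 2 * (x+1)) = (2*x+1)*(2*x+2) * Real.Gamma (1 + 2 * x) := by
    rw [show 1 + 2 * (x+1) = (1 + 2*x) + 1 + 1 by ring, G _ (by positivity), G _ (by positivity)]
    ring
  have a3 : Real.Gamma (1 + 3 * (x+1)) = (3*x+1)*(3*x+2)*(3*x+3) * Real.Gamma (1 + 3 * x) := by
    rw [show 1 + 3 * (x+1) = (1 + 3*x) + 1 + 1 + 1 by ring, G _ (by positivity),
      G _ (by positivity), G _ (by positivity)]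
    ring
  have a4 : Real.Gamma (1 + 4 * (x+1)) =
      (4*x+1)*(4*x+2)*(4*x+3)*(4*x+4) * Real.Gamma (1 + 4 * x) := by
    rw [show 1 + 4 * (x+1) = (1 + 4*x) + 1 + 1 + 1 + 1 by ring, G _ (by positivity),
      G _ (by positivity), G _ (by positivity), G _ (by positivity)]
    ring
  rw [a2, a3, a4, gg]; ring

/-- uniqueness, applied to our situation -/
lemma final_unique (M : ℝ → ℝ) (hM : LC M) (pM : ∀ x, 0 ≤ x → 0 < M x) (M0 : M 0 = 1)
    (rM : ∀ x, 0 ≤ x → M (x + 1) =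
      24 * (2*x+1)*(3*x+1)*(3*x+2)*(4*x+1)*(4*x+2)*(4*x+3) * M x) (x : ℝ) (hx : 0 ≤ x) :
    M x * Real.Gamma (1 + x) ^ 3 =
      Real.Gamma (1 + 2 * x) * Real.Gamma (1 + 3 * x) * Real.Gamma (1 + 4 * x) := by
  have pG : ∀ j : ℝ, 0 ≤ j → ∀ x, 0 ≤ x → 0 < Real.Gamma (1 + j * x) :=
    fun j hj x hx => Real.Gamma_pos_of_pos (by positivity)
  have L1 := LC_Gamma 1 (by norm_num)
  have P1 := pG 1 (by norm_num)
  have L2 := LC_Gamma 2 (by norm_num)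
  have P2 := pG 2 (by norm_num)
  have L3 := LC_Gamma 3 (by norm_num)
  have P3 := pG 3 (by norm_num)
  have L4 := LC_Gamma 4 (by norm_num)
  have P4 := pG 4 (by norm_num)
  have P11 : ∀ x, 0 ≤ x → 0 < Real.Gamma (1 + 1 * x) * Real.Gamma (1 + 1 * x) :=
    fun x hx => mul_pos (P1 x hx) (P1 x hx)
  have P111 : ∀ x, 0 ≤ x → 0 < Real.Gamma (1 + 1 * x) * Real.Gamma (1 + 1 * x) * Real.Gamma (1 + 1 * x) :=
    fun x hx => mul_pos (P11 x hx) (P1 x hx)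
  have P23 : ∀ x, 0 ≤ x → 0 < Real.Gamma (1 + 2 * x) * Real.Gamma (1 + 3 * x) :=
    fun x hx => mul_pos (P2 x hx) (P3 x hx)
  have LA := hM.mul ((L1.mul L1 P1 P1).mul L1 P11 P1) pM P111
  have LB := (L2.mul L3 P2 P3).mul L4 P23 P4
  have := bm (g := gg) LA LB (fun x hx => mul_pos (pM x hx) (P111 x hx))
    (fun x hx => mul_pos (P23 x hx) (P4 x hx)) gg_pos ?_ Gprod_rec (by simp [M0])
    (fun s _ _ => gg_tendsto s) x hx
  · simp only [one_mul] at this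
    rw [← this]; ring
  · intro x hx
    have : Real.Gamma (1 + 1 * (x + 1)) = (1 + x) * Real.Gamma (1 + 1 * x) := by
      rw [show 1 + 1 * (x + 1) = (1 + 1 * x) + 1 by ring, Real.Gamma_add_one (by positivity)]; ring
    simp only [this, rM x hx, gg]
    ring


/-- four-dimensional Euclidean space -/
abbrev E4 := EuclideanSpace ℝ (Fin 4)

/-- continuous functions of polynomial growth -/
def PG (f : E4 → ℝ) : Prop := Continuous f ∧ ∃ (C : ℝ) (N : ℕ), 0 ≤ C ∧ ∀ x, |f x| ≤ C * (1 + ‖x‖) ^ N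

lemma PG.add {f g : E4 → ℝ} (hf : PG f) (hg : PG g) : PG (fun x => f x + g x) := by
  obtain ⟨cf, C, N, hC, h⟩ := hf
  obtain ⟨cg, C', N', hC', h'⟩ := hg
  refine ⟨cf.add cg, C + C', N + N', by positivity, fun x => ?_⟩
  have h1 : (1:ℝ) ≤ 1 + ‖x‖ := by linarith [norm_nonneg x]
  calc |f x + g x| ≤ |f x| + |g x| := abs_add_le _ _
    _ ≤ C * (1 + ‖x‖) ^ N + C' * (1 + ‖x‖) ^ N' := add_le_add (h x) (h' x)
    _ ≤ C * (1 + ‖x‖) ^ (N + N') + C' * (1 + ‖x‖) ^ (N + N') := by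
      gcongr <;> first | exact h1 | omega
    _ = _ := by ring

lemma PG.mul {f g : E4 → ℝ} (hf : PG f) (hg : PG g) : PG (fun x => f x * g x) := by
  obtain ⟨cf, C, N, hC, h⟩ := hf
  obtain ⟨cg, C', N', hC', h'⟩ := hg
  refine ⟨cf.mul cg, C * C', N + N', by positivity, fun x => ?_⟩
  rw [abs_mul]
  calc |f x| * |g x| ≤ (C * (1 + ‖x‖) ^ N) * (C' * (1 + ‖x‖) ^ N') := by
        gcongr
        · exact h x
        · exact h' x
    _ = _ := by ring

lemma PG.const (c : ℝ) : PG (fun _ => c) :=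
  ⟨continuous_const, |c|, 0, abs_nonneg _, fun x => by simp⟩

lemma PG.coord (i : Fin 4) : PG (fun x => x i) := by
  refine ⟨by fun_prop, 1, 1, by norm_num, fun x => ?_⟩
  have := PiLp.norm_apply_le x i
  rw [Real.norm_eq_abs] at this
  simp; linarith

/-- real powers of nonnegative functions of polynomial growth -/
lemma PG.rpow {f : E4 → ℝ} (hf : PG f) (h0 : ∀ x, 0 ≤ f x) (κ : ℝ) (hκ : 0 ≤ κ) :
    PG (fun x => f x ^ κ) := by
  obtain ⟨cf, C, N, hC, h⟩ := hf
  refine ⟨cf.rpow_const fun x => Or.inr hκ, C ^ κ, ⌈N * κ⌉₊, by positivity, fun x => ?_⟩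
  have h1 : (1:ℝ) ≤ 1 + ‖x‖ := by linarith [norm_nonneg x]
  rw [abs_of_nonneg (Real.rpow_nonneg (h0 x) _)]
  have := h x
  rw [abs_of_nonneg (h0 x)] at this
  calc f x ^ κ ≤ (C * (1 + ‖x‖) ^ N) ^ κ := Real.rpow_le_rpow (h0 x) this hκ
    _ = C ^ κ * (1 + ‖x‖) ^ (N * κ) := by
      rw [Real.mul_rpow hC (by positivity), ← Real.rpow_natCast, ← Real.rpow_mul (by positivity)]
    _ ≤ C ^ κ * (1 + ‖x‖) ^ (⌈N * κ⌉₊ : ℝ) := by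
      gcongr
      exact Nat.le_ceil _
    _ = _ := by rw [Real.rpow_natCast]

lemma pow_mul_gauss_le (K : ℕ) (r : ℝ) (hr : 0 ≤ r) :
    (1 + r) ^ K * Real.exp (-r ^ 2 / 2) ≤ K.factorial * Real.exp (3 / 2) := by
  have h1 := Real.pow_div_factorial_le_exp (1 + r) (by positivity) K
  rw [div_le_iff₀ (by positivity)] at h1
  calc (1 + r) ^ K * Real.exp (-r ^ 2 / 2) ≤ (Real.exp (1 + r) * K.factorial) * Real.exp (-r ^ 2 / 2) := by
        gcongr
    _ = K.factorial * Real.exp (1 + r + -r ^ 2 / 2) := by rw [Real.exp_add (1 + r)]; ring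
    _ ≤ _ := by
      gcongr
      nlinarith [sq_nonneg (r - 1)]

lemma PG.integrable_vol {f : E4 → ℝ} (hf : PG f) :
    Integrable (fun x => f x * Real.exp (-‖x‖ ^ 2 / 2)) := by
  obtain ⟨cf, C, N, hC, h⟩ := hf
  have h5 : Integrable (fun x : E4 => (1 + ‖x‖) ^ (-5 : ℝ)) :=
    integrable_one_add_norm (by simp; norm_num)
  refine (h5.const_mul (C * ((N + 5).factorial * Real.exp (3 / 2)))).mono'
    (Continuous.aestronglyMeasurable (by fun_prop)) (Eventually.of_forall fun x => ?_)
  have hp : (0:ℝ) < 1 + ‖x‖ := by positivity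
  rw [Real.norm_eq_abs, abs_mul, Real.abs_exp]
  have e : (1 + ‖x‖) ^ (-5 : ℝ) = ((1 + ‖x‖) ^ 5)⁻¹ := by
    rw [Real.rpow_neg hp.le]; norm_cast
  rw [e, ← div_eq_mul_inv, le_div_iff₀ (by positivity)]
  calc |f x| * Real.exp (-‖x‖ ^ 2 / 2) * (1 + ‖x‖) ^ 5
      ≤ (C * (1 + ‖x‖) ^ N) * Real.exp (-‖x‖ ^ 2 / 2) * (1 + ‖x‖) ^ 5 := by gcongr; exact h x
    _ = C * ((1 + ‖x‖) ^ (N + 5) * Real.exp (-‖x‖ ^ 2 / 2)) := by ring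
    _ ≤ C * ((N + 5).factorial * Real.exp (3 / 2)) := mul_le_mul_of_nonneg_left (pow_mul_gauss_le _ _ (norm_nonneg x)) hC

/-- (unnormalized) Gaussian measure -/
noncomputable def gam : Measure E4 :=
  volume.withDensity (fun x => ENNReal.ofReal (Real.exp (-‖x‖ ^ 2 / 2)))

lemma integral_gam (f : E4 → ℝ) : ∫ x, f x ∂gam = ∫ x, f x * Real.exp (-‖x‖ ^ 2 / 2) := by
  rw [gam, integral_withDensity_eq_integral_toReal_smul (by fun_prop) (by simp)]
  congr 1; ext x
  rw [ENNReal.toReal_ofReal (Real.exp_pos _).le, smul_eq_mul, mul_comm]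

lemma integrable_gam_iff (f : E4 → ℝ) :
    Integrable f gam ↔ Integrable (fun x => f x * Real.exp (-‖x‖ ^ 2 / 2)) := by
  rw [gam, integrable_withDensity_iff (by fun_prop) (by simp)]
  simp only [ENNReal.toReal_ofReal (Real.exp_pos _).le]

lemma PG.integrable {f : E4 → ℝ} (hf : PG f) : Integrable f gam :=
  (integrable_gam_iff f).2 hf.integrable_vol

instance : IsFiniteMeasure gam := by
  have := (PG.const 1).integrable
  rwa [integrable_const_iff, or_iff_right (by norm_num)] at this

lemma gam_map (R : E4 ≃ₗᵢ[ℝ] E4) : Measure.map R gam = gam := by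
  ext s hs
  have hm : Measurable R := R.continuous.measurable
  rw [Measure.map_apply hm hs, gam, withDensity_apply _ (hm hs), withDensity_apply _ hs]
  rw [← R.measurePreserving.setLIntegral_comp_preimage hs (by fun_prop)]
  simp

lemma gam_univ_pos : 0 < ∫ _x : E4, (1:ℝ) ∂gam := by
  rw [integral_gam]
  refine (integral_pos_iff_support_of_nonneg (fun x => by positivity) (PG.const 1).integrable_vol).2 ?_
  have : Function.support (fun x : E4 => (1:ℝ) * Real.exp (-‖x‖ ^ 2 / 2)) = Set.univ := by
    ext x; simp [Real.exp_ne_zero]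
  rw [this]; simp

/-- radial moments -/
lemma radial (d : ℝ) (hd : 0 ≤ d) : ∫ x : E4, ‖x‖ ^ (2 * d) ∂gam =
    (2 : ℝ) ^ d * Real.Gamma (2 + d) * ∫ _x : E4, (1:ℝ) ∂gam := by
  have key : ∀ d : ℝ, 0 ≤ d → ∫ x : E4, ‖x‖ ^ (2 * d) ∂gam =
      Module.finrank ℝ E4 * (volume : Measure E4).real (Metric.ball 0 1) *
        ((2:ℝ) ^ d * 2 * Real.Gamma (2 + d)) := by
    intro d hd
    rw [integral_gam, integral_fun_norm_addHaar volume
      (fun r : ℝ => r ^ (2 * d) * Real.exp (-r ^ 2 / 2))]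
    rw [nsmul_eq_mul, smul_eq_mul, mul_assoc]
    congr 2
    have := integral_rpow_mul_exp_neg_mul_rpow (p := 2) (q := 3 + 2 * d) (b := 1 / 2)
      (by norm_num) (by linarith) (by norm_num)
    have e : ((3 + 2 * d) + 1) / 2 = 2 + d := by ring
    have e' : -((3 + 2 * d) + 1) / 2 = -(2 + d) := by ring
    rw [e, e'] at this
    have e2 : ((1:ℝ) / 2) ^ (-(2 + d)) = 4 * 2 ^ d := by
      rw [one_div, Real.inv_rpow (by norm_num), Real.rpow_neg (by norm_num), inv_inv,
        Real.rpow_add (by norm_num)]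
      norm_num
    rw [e2] at this
    rw [show (2:ℝ) ^ d * 2 * Real.Gamma (2 + d) = 4 * 2 ^ d * (1 / 2) * Real.Gamma (2 + d) by ring,
      ← this]
    refine setIntegral_congr_fun measurableSet_Ioi fun r hr => ?_
    have hr : (0:ℝ) < r := hr
    simp only [smul_eq_mul]
    rw [Real.rpow_add hr, Real.rpow_two]
    have : Module.finrank ℝ E4 - 1 = 3 := by simp
    rw [this, show -r ^ 2 / 2 = -(1/2) * r ^ 2 by ring]
    norm_cast
    ring
  have k0 := key 0 le_rfl
  simp only [mul_zero, Real.rpow_zero, add_zero, Real.Gamma_two, one_mul, mul_one] at k0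
  rw [key d hd, k0]; ring


/-- the unit sphere -/
abbrev S3 := Metric.sphere (0 : E4) 1

lemma reflect {u v : E4} (h : ‖u‖ = ‖v‖) : ∃ R : E4 ≃ₗᵢ[ℝ] E4, R u = v :=
  ⟨_, Submodule.reflection_sub h⟩

section polar
open scoped RealInnerProductSpace

lemma gam_radial {u v : E4} (h : ‖u‖ = ‖v‖) : charFun gam u = charFun gam v := by
  obtain ⟨R, hR⟩ := reflect h
  rw [charFun_apply, charFun_apply]
  conv_rhs => rw [← gam_map R]
  rw [integral_map R.continuous.measurable.aemeasurable
    (Continuous.aestronglyMeasurable (by fun_prop)), ← hR]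
  simp


lemma omega_comp (ω : Measure S3) {F : Type*} [NormedAddCommGroup F] [NormedSpace ℝ F]
    (hinv : ∀ R : E4 ≃ₗᵢ[ℝ] E4,
      Measure.map (fun x : S3 =>
        (⟨R x.1, mem_sphere_zero_iff_norm.mpr
          (by rw [R.norm_map]; exact mem_sphere_zero_iff_norm.mp x.2)⟩ : S3)) ω = ω)
    (R : E4 ≃ₗᵢ[ℝ] E4) (f : E4 → F) (hf : Continuous f) :
    ∫ x : S3, f x ∂ω = ∫ x : S3, f (R x) ∂ω := by
  have hc : Continuous (fun x : S3 =>
        (⟨R x.1, mem_sphere_zero_iff_norm.mpr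
          (by rw [R.norm_map]; exact mem_sphere_zero_iff_norm.mp x.2)⟩ : S3)) := by
    apply Continuous.subtype_mk
    exact R.continuous.comp continuous_subtype_val
  conv_lhs => rw [← hinv R]
  rw [integral_map hc.measurable.aemeasurable]
  exact Continuous.aestronglyMeasurable (hf.comp continuous_subtype_val)

lemma omega_radial (ω : Measure S3) [IsProbabilityMeasure ω]
    (hinv : ∀ R : E4 ≃ₗᵢ[ℝ] E4,
      Measure.map (fun x : S3 =>
        (⟨R x.1, mem_sphere_zero_iff_norm.mpr
          (by rw [R.norm_map]; exact mem_sphere_zero_iff_norm.mp x.2)⟩ : S3)) ω = ω) {u v : E4} (h : ‖u‖ = ‖v‖) :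
    ∫ x : S3, Complex.exp (⟪(x : E4), u⟫ * Complex.I) ∂ω =
    ∫ x : S3, Complex.exp (⟪(x : E4), v⟫ * Complex.I) ∂ω := by
  obtain ⟨R, hR⟩ := reflect h
  rw [omega_comp ω hinv R (fun x : E4 => Complex.exp (⟪x, v⟫ * Complex.I)) (by fun_prop), ← hR]
  simp

lemma polar (ω : Measure S3) [IsProbabilityMeasure ω]
    (hinv : ∀ R : E4 ≃ₗᵢ[ℝ] E4,
      Measure.map (fun x : S3 =>
        (⟨R x.1, mem_sphere_zero_iff_norm.mpr
          (by rw [R.norm_map]; exact mem_sphere_zero_iff_norm.mp x.2)⟩ : S3)) ω = ω) : Measure.map (fun p : E4 × S3 => ‖p.1‖ • (p.2 : E4)) (gam.prod ω) = gam := by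
  apply Measure.ext_of_charFun
  ext ξ
  have hint : ∀ g : E4 × S3 → ℝ, Continuous g →
      Integrable (fun p => Complex.exp (g p * Complex.I)) (gam.prod ω) := by
    intro g hg
    refine (integrable_const (1:ℝ)).mono' (Continuous.aestronglyMeasurable (by fun_prop)) ?_
    exact Eventually.of_forall fun p => by rw [Complex.norm_exp_ofReal_mul_I]
  rw [charFun_apply, integral_map (Continuous.measurable (by fun_prop)).aemeasurable
    (Continuous.aestronglyMeasurable (by fun_prop))]
  rw [integral_prod _ (hint (fun p => ⟪‖p.1‖ • (p.2 : E4), ξ⟫) (by fun_prop))]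
  have h1 : ∀ y : E4, ∫ x : S3, Complex.exp (⟪‖y‖ • (x : E4), ξ⟫ * Complex.I) ∂ω =
      ∫ x : S3, Complex.exp (⟪(x : E4), ‖ξ‖ • y⟫ * Complex.I) ∂ω := by
    intro y
    rw [← omega_radial ω hinv (u := ‖y‖ • ξ) (v := ‖ξ‖ • y)
      (by simp [norm_smul, mul_comm])]
    simp [inner_smul_left, inner_smul_right]
  simp only [h1]
  rw [integral_integral_swap (hint (fun p => ⟪(p.2 : E4), ‖ξ‖ • p.1⟫) (by fun_prop))]
  have h2 : ∀ x : S3, ∫ y : E4, Complex.exp (⟪(x : E4), ‖ξ‖ • y⟫ * Complex.I) ∂gam =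
      charFun gam ξ := by
    intro x
    rw [← gam_radial (u := ‖ξ‖ • (x : E4)) (v := ξ)
      (by simp [norm_smul, mem_sphere_zero_iff_norm.mp x.2]), charFun_apply]
    congr 1; ext y
    rw [inner_smul_right, inner_smul_right, real_inner_comm]
  simp [h2]

lemma polar_integral (ω : Measure S3) [IsProbabilityMeasure ω]
    (hinv : ∀ R : E4 ≃ₗᵢ[ℝ] E4,
      Measure.map (fun x : S3 =>
        (⟨R x.1, mem_sphere_zero_iff_norm.mpr
          (by rw [R.norm_map]; exact mem_sphere_zero_iff_norm.mp x.2)⟩ : S3)) ω = ω) (f : E4 → ℝ) (hf : Continuous f) (d : ℝ) (hd : 0 ≤ d)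
    (hom : ∀ (r : ℝ) (x : E4), 0 ≤ r → f (r • x) = r ^ (2 * d) * f x) :
    ∫ x, f x ∂gam = ((2 : ℝ) ^ d * Real.Gamma (2 + d) * ∫ _x : E4, (1:ℝ) ∂gam) *
      ∫ x : S3, f x ∂ω := by
  conv_lhs => rw [← polar ω hinv]
  rw [integral_map (Continuous.measurable (by fun_prop)).aemeasurable hf.aestronglyMeasurable]
  simp only [hom _ _ (norm_nonneg _)]
  rw [integral_prod_mul (fun x : E4 => ‖x‖ ^ (2 * d)) (fun x : S3 => f x), radial d hd]

end polar

section ibp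
open MvPolynomial

/-- polynomials in four variables -/
abbrev Po := MvPolynomial (Fin 4) ℝ

/-- evaluation at a point -/
noncomputable def ev (p : Po) (x : E4) : ℝ := MvPolynomial.eval (fun i => x i) p

lemma ev_pg (p : Po) : PG (ev p) := by
  induction p using MvPolynomial.induction_on with
  | C a =>
    have e : ev (C a) = fun _ => a := by ext x; simp [ev]
    rw [e]; exact PG.const a
  | add p q hp hq =>
    have e : ev (p + q) = fun x => ev p x + ev q x := by ext x; simp [ev]
    rw [e]; exact hp.add hq
  | mul_X p i hp =>
    have e : ev (p * X i) = fun x => ev p x * x i := by ext x; simp [ev]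
    rw [e]; exact hp.mul (PG.coord i)

lemma ev_line (p : Po) (i : Fin 4) (x : E4) :
    HasLineDerivAt ℝ (ev p) (ev (pderiv i p) x) x (EuclideanSpace.single i 1) := by
  unfold HasLineDerivAt
  induction p using MvPolynomial.induction_on with
  | C a => simpa [ev] using! hasDerivAt_const (0:ℝ) a
  | add p q hp hq => simpa [ev] using! hp.add hq
  | mul_X p j hp =>
    have hX : HasDerivAt (fun t : ℝ => ev (X j : Po) (x + t • EuclideanSpace.single i 1))
        (ev (pderiv i (X j : Po)) x) 0 := by
      by_cases h : j = i
      · subst h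
        simpa [ev] using! (hasDerivAt_id (0:ℝ)).const_add (x j)
      · simpa [ev, pderiv_X_of_ne h, h] using! hasDerivAt_const (0:ℝ) (x j)
    have := hp.mul hX
    simp only [zero_smul, add_zero] at this
    convert! this using 1
    · ext t; simp [ev]
    · simp [ev]; ring

lemma gauss_line (i : Fin 4) (x : E4) :
    HasLineDerivAt ℝ (fun x : E4 => Real.exp (-‖x‖ ^ 2 / 2)) (-(x i) * Real.exp (-‖x‖ ^ 2 / 2)) x
      (EuclideanSpace.single i 1) := by
  unfold HasLineDerivAt
  have h1 : ∀ t : ℝ, -‖x + t • (EuclideanSpace.single i 1 : E4)‖ ^ 2 / 2 =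
      -(‖x‖ ^ 2 + 2 * (t * x i) + t ^ 2) / 2 := by
    intro t
    rw [norm_add_sq_real]
    simp [inner_smul_right, norm_smul, EuclideanSpace.inner_single_right]
  simp only [h1]
  have h2 : HasDerivAt (fun t : ℝ => -(‖x‖ ^ 2 + 2 * (t * x i) + t ^ 2) / 2) (-(x i)) 0 := by
    have := ((((((hasDerivAt_id (0:ℝ)).mul_const (x i)).const_mul 2).const_add (‖x‖^2)).add
      ((hasDerivAt_id (0:ℝ)).pow 2)).neg).div_const 2
    convert! this using 1
    simp
    ring
  have := h2.exp
  convert! this using 1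
  simp; ring

lemma shift_pg (D : Po) (hD : ∀ x, 0 ≤ ev D x) (κ : ℝ) (ε : ℝ) (hε : 0 < ε) (hκ : 0 ≤ κ) : PG (fun x => (ev D x + ε) ^ κ) :=
  ((ev_pg D).add (PG.const ε)).rpow (fun x => by linarith [hD x]) κ hκ

lemma inv_pg (D : Po) (hD : ∀ x, 0 ≤ ev D x) (ε : ℝ) (hε : 0 < ε) : PG (fun x => (ev D x + ε)⁻¹) := by
  have hp : ∀ x, 0 < ev D x + ε := fun x => by linarith [hD x]
  refine ⟨((ev_pg D).1.add continuous_const).inv₀ fun x => (hp x).ne', ε⁻¹, 0, by positivity, ?_⟩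
  intro x
  rw [abs_of_pos (inv_pos.2 (hp x)), pow_zero, mul_one]
  gcongr
  linarith [hD x]

lemma ibp_one (D : Po) (hD : ∀ x, 0 ≤ ev D x) (κ : ℝ) (hκ : 0 ≤ κ) (ε : ℝ) (hε : 0 < ε) (P : Po) (i : Fin 4) :
    ∫ x, (ev (pderiv i P) x + κ * (ev D x + ε)⁻¹ * (ev P x * ev (pderiv i D) x) - ev P x * x i) *
      (ev D x + ε) ^ κ ∂gam = 0 := by
  have hp : ∀ x, 0 < ev D x + ε := fun x => by linarith [hD x]
  have wp := shift_pg D hD κ ε hε hκ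
  have ip := inv_pg D hD ε hε
  have A1 : PG (fun x => (ev (pderiv i P) x + κ * (ev D x + ε)⁻¹ * (ev P x * ev (pderiv i D) x))
      * (ev D x + ε) ^ κ) :=
    ((ev_pg _).add (((PG.const κ).mul ip).mul ((ev_pg _).mul (ev_pg _)))).mul wp
  have A2 : PG (fun x => ev P x * (ev D x + ε) ^ κ) := (ev_pg _).mul wp
  have A3 : PG (fun x => ev P x * (ev D x + ε) ^ κ * (-(x i))) := by
    have := A2.mul ((PG.const (-1)).mul (PG.coord i))
    simpa using this
  have key := integral_bilinear_hasLineDerivAt_right_eq_neg_left_of_integrable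
    (μ := (volume : Measure E4)) (B := ContinuousLinearMap.mul ℝ ℝ)
    (f := fun x => ev P x * (ev D x + ε) ^ κ)
    (f' := fun x => (ev (pderiv i P) x + κ * (ev D x + ε)⁻¹ * (ev P x * ev (pderiv i D) x))
      * (ev D x + ε) ^ κ)
    (g := fun x : E4 => Real.exp (-‖x‖ ^ 2 / 2))
    (g' := fun x : E4 => -(x i) * Real.exp (-‖x‖ ^ 2 / 2)) (v := EuclideanSpace.single i 1)
    (by simpa using A1.integrable_vol)
    (by simpa [mul_assoc] using A3.integrable_vol) (by simpa using A2.integrable_vol)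
    (fun x _ => by
      have h1 := ev_line P i x
      have h2 := ev_line D i x
      unfold HasLineDerivAt at h1 h2 ⊢
      have h3 := (h2.add_const ε).rpow_const (p := κ) (Or.inl (by simpa using (hp x).ne'))
      have h4 := h1.mul h3
      convert! h4 using 1
      simp only [zero_smul, add_zero]
      rw [Real.rpow_sub_one (hp x).ne']
      field_simp)
    (fun x _ => gauss_line i x)
  simp only [ContinuousLinearMap.mul_apply'] at key
  have e1 : ∫ x : E4, ev P x * (ev D x + ε) ^ κ * (-(x i) * Real.exp (-‖x‖ ^ 2 / 2)) =
      ∫ x, ev P x * (ev D x + ε) ^ κ * (-(x i)) ∂gam := by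
    rw [integral_gam]; congr 1; ext x; ring
  rw [e1, ← integral_gam (fun x => (ev (pderiv i P) x + κ * (ev D x + ε)⁻¹ * (ev P x * ev (pderiv i D) x))
      * (ev D x + ε) ^ κ)] at key
  have e2 := integral_add A1.integrable A3.integrable
  rw [key, add_neg_cancel] at e2
  rw [← e2]
  congr 1; ext x; ring

lemma ibp_sum (D : Po) (hD : ∀ x, 0 ≤ ev D x) (κ : ℝ) (hκ : 0 ≤ κ) (ε : ℝ) (hε : 0 < ε) (V : Fin 4 → Po) (h : Po)
    (hV : ∑ i, V i * pderiv i D = 2 * h * D) :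
    ∫ x, (ev (∑ i, pderiv i (V i) - ∑ i, V i * X i) x + 2 * κ * ev h x * (ev D x * (ev D x + ε)⁻¹)) *
      (ev D x + ε) ^ κ ∂gam = 0 := by
  have wp := shift_pg D hD κ ε hε hκ
  have ip := inv_pg D hD ε hε
  have A : ∀ i, PG (fun x => (ev (pderiv i (V i)) x + κ * (ev D x + ε)⁻¹ *
      (ev (V i) x * ev (pderiv i D) x) - ev (V i) x * x i) * (ev D x + ε) ^ κ) := by
    intro i
    have := (((ev_pg (pderiv i (V i))).add (((PG.const κ).mul ip).mul ((ev_pg (V i)).mul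
      (ev_pg (pderiv i D))))).add ((PG.const (-1)).mul ((ev_pg (V i)).mul (PG.coord i)))).mul wp
    simpa [sub_eq_add_neg] using this
  have := integral_finsetSum Finset.univ (fun i _ => (A i).integrable)
  simp only [ibp_one D hD κ hκ ε hε, Finset.sum_const_zero] at this
  rw [← this]
  congr 1; ext x
  have hVx : ∑ i, ev (V i) x * ev (pderiv i D) x = 2 * ev h x * ev D x := by
    have := congrArg (fun p => ev p x) hV
    simpa [ev] using this
  rw [← Finset.sum_mul]
  congr 1
  rw [Finset.sum_sub_distrib, Finset.sum_add_distrib, ← Finset.mul_sum, hVx]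
  simp [ev]
  ring

lemma ibp_main (D : Po) (hD : ∀ x, 0 ≤ ev D x) (κ : ℝ) (hκ : 0 ≤ κ) (V : Fin 4 → Po) (h : Po)
    (hV : ∑ i, V i * pderiv i D = 2 * h * D) :
    ∫ x, ev (∑ i, pderiv i (V i) - ∑ i, V i * X i + C (2 * κ) * h) x * (ev D x) ^ κ ∂gam = 0 := by
  set A : Po := ∑ i, pderiv i (V i) - ∑ i, V i * X i with hA
  have lim := tendsto_integral_filter_of_dominated_convergence (μ := gam)
    (l := 𝓝[>] (0:ℝ)) (F := fun (ε : ℝ) x =>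
      (ev A x + 2 * κ * ev h x * (ev D x * (ev D x + ε)⁻¹)) * (ev D x + ε) ^ κ)
    (f := fun x => ev (A + C (2 * κ) * h) x * (ev D x) ^ κ)
    (fun x => |ev A x * (ev D x + 1) ^ κ| + 2 * κ * |ev h x * (ev D x + 1) ^ κ|) ?_ ?_ ?_ ?_
  · refine tendsto_nhds_unique lim ?_
    refine tendsto_const_nhds.congr' ?_
    filter_upwards [self_mem_nhdsWithin] with ε hε
    exact (ibp_sum D hD κ hκ ε hε V h hV).symm
  · filter_upwards [self_mem_nhdsWithin] with ε hε
    have wp := shift_pg D hD κ ε hε hκ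
    have ip := inv_pg D hD ε hε
    exact (((ev_pg A).add (((PG.const (2 * κ)).mul (ev_pg h)).mul ((ev_pg D).mul ip))).mul
      wp).1.aestronglyMeasurable
  · filter_upwards [self_mem_nhdsWithin, Ioo_mem_nhdsGT (show (0:ℝ) < 1 by norm_num)] with ε hε h1
    refine Eventually.of_forall fun x => ?_
    have hε : 0 < ε := hε
    have hx := hD x
    have hw : (ev D x + ε) ^ κ ≤ (ev D x + 1) ^ κ :=
      Real.rpow_le_rpow (by linarith) (by linarith [h1.2]) hκ
    have hw0 : 0 ≤ (ev D x + ε) ^ κ := Real.rpow_nonneg (by linarith) _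
    have hq : ev D x * (ev D x + ε)⁻¹ ≤ 1 := by
      rw [← div_eq_mul_inv, div_le_one (by linarith)]; linarith
    have hq0 : 0 ≤ ev D x * (ev D x + ε)⁻¹ := by
      have : 0 < ev D x + ε := by linarith
      positivity
    rw [Real.norm_eq_abs, abs_mul, abs_mul, abs_mul, abs_of_nonneg hw0,
      abs_of_nonneg (hw0.trans hw)]
    calc |ev A x + 2 * κ * ev h x * (ev D x * (ev D x + ε)⁻¹)| * (ev D x + ε) ^ κ
        ≤ (|ev A x| + 2 * κ * |ev h x|) * (ev D x + 1) ^ κ := by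
          gcongr
          refine (abs_add_le _ _).trans ?_
          gcongr
          rw [abs_mul, abs_mul, abs_of_nonneg hq0, abs_of_nonneg (show 0 ≤ 2 * κ by positivity)]
          exact mul_le_of_le_one_right (by positivity) hq
      _ = _ := by ring
  · have wp := shift_pg D hD κ 1 one_pos hκ
    exact ((ev_pg A).mul wp).integrable.abs.add (((ev_pg h).mul wp).integrable.abs.const_mul _)
  · refine Eventually.of_forall fun x => ?_
    have l1 : Tendsto (fun ε : ℝ => ev D x + ε) (𝓝[>] (0:ℝ)) (𝓝 (ev D x)) := by
      have : Tendsto (fun ε : ℝ => ev D x + ε) (𝓝 (0:ℝ)) (𝓝 (ev D x + 0)) :=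
        (continuous_const.add continuous_id).tendsto _
      rw [add_zero] at this
      exact this.mono_left nhdsWithin_le_nhds
    have l2 : Tendsto (fun ε : ℝ => (ev D x + ε) ^ κ) (𝓝[>] (0:ℝ)) (𝓝 (ev D x ^ κ)) :=
      l1.rpow_const (Or.inr hκ)
    have e : ev (A + C (2 * κ) * h) x = ev A x + 2 * κ * ev h x := by simp [ev]
    rw [e]
    rcases (hD x).eq_or_lt with h0 | h0
    · have := l2.const_mul (ev A x)
      rw [← h0] at this ⊢
      have z : κ * (0:ℝ) ^ κ = 0 := by
        rcases hκ.eq_or_lt with rfl | hk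
        · simp
        · rw [Real.zero_rpow hk.ne', mul_zero]
      have e2 : (ev A x + 2 * κ * ev h x) * (0:ℝ) ^ κ = ev A x * 0 ^ κ := by
        linear_combination 2 * ev h x * z
      rw [e2]
      simpa using this
    · have l3 := (l1.inv₀ h0.ne').const_mul (ev D x)
      rw [mul_inv_cancel₀ h0.ne'] at l3
      have := ((l3.const_mul (2 * κ * ev h x)).const_add (ev A x)).mul l2
      simpa using this

end ibp

section recursion
open MvPolynomial

/-- first invariant -/
noncomputable def e1 : Po := X 1 ^ 2 + X 2 ^ 2 + X 3 ^ 2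
/-- cubic invariant -/
noncomputable def qq : Po := X 1 * X 2 * X 3
/-- quartic invariant -/
noncomputable def e2 : Po := X 1 ^ 2 * X 2 ^ 2 + X 1 ^ 2 * X 3 ^ 2 + X 2 ^ 2 * X 3 ^ 2
/-- the product of roots -/
noncomputable def del : Po := (X 1 ^ 2 - X 2 ^ 2) * (X 1 ^ 2 - X 3 ^ 2) * (X 2 ^ 2 - X 3 ^ 2)
/-- the discriminant -/
noncomputable def DD : Po := del ^ 2

lemma DD_eq : DD = e1 ^ 2 * e2 ^ 2 - 4 * e2 ^ 3 - 4 * e1 ^ 3 * qq ^ 2 + 18 * e1 * e2 * qq ^ 2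
    - 27 * qq ^ 4 := by
  unfold DD del e1 e2 qq; ring

lemma DD_nonneg (x : E4) : 0 ≤ ev DD x := by
  simp only [ev, DD, map_pow]; positivity

/-- carre du champ -/
noncomputable def Gam (f g : Po) : Po := ∑ i, pderiv i f * pderiv i g

lemma Gam_comm (f g : Po) : Gam f g = Gam g f := by simp [Gam, mul_comm]

lemma Gam_mul (f g h : Po) : Gam f (g * h) = Gam f g * h + g * Gam f h := by
  simp only [Gam, Finset.sum_mul, Finset.mul_sum, ← Finset.sum_add_distrib, Derivation.leibniz,
    smul_eq_mul]
  refine Finset.sum_congr rfl fun i _ => ?_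
  ring

lemma Gam_one (f : Po) : Gam f 1 = 0 := by
  simp [Gam]

lemma pd2 (i : Fin 4) : pderiv i (2 : Po) = 0 := by
  have h : (2 : Po) = C 2 := (map_ofNat C 2).symm
  rw [h, pderiv_C]

lemma Gam_11 : Gam e1 e1 = 4 * e1 := by
  simp [Gam, e1, Fin.sum_univ_four, pderiv_X]; ring
lemma Gam_1q : Gam e1 qq = 6 * qq := by
  simp [Gam, e1, qq, Fin.sum_univ_four, pderiv_X]; ring
lemma Gam_12 : Gam e1 e2 = 8 * e2 := by
  simp [Gam, e1, e2, Fin.sum_univ_four, pderiv_X]; ring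
lemma Gam_qq : Gam qq qq = e2 := by
  simp [Gam, e2, qq, Fin.sum_univ_four, pderiv_X]; ring
lemma Gam_q2 : Gam qq e2 = 4 * qq * e1 := by
  simp [Gam, e1, qq, e2, Fin.sum_univ_four, pderiv_X]; ring
lemma Gam_22 : Gam e2 e2 = 4 * (e1 * e2 + 3 * qq ^ 2) := by
  simp [Gam, e1, qq, e2, Fin.sum_univ_four, pderiv_X]; ring
lemma Gam_1d : Gam e1 del = 12 * del := by
  simp [Gam, e1, del, Fin.sum_univ_four, pderiv_X]; ring
lemma Gam_qd : Gam qq del = 0 * del := by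
  simp [Gam, qq, del, Fin.sum_univ_four, pderiv_X]; ring
lemma Gam_2d : Gam e2 del = (4 * e1) * del := by
  simp [Gam, e1, e2, del, Fin.sum_univ_four, pderiv_X]; ring

/-- integration against the weight, as a linear functional -/
noncomputable def J (κ : ℝ) (p : Po) : ℝ := ∫ x, ev p x * (ev DD x) ^ κ ∂gam

lemma wint (κ : ℝ) (hκ : 0 ≤ κ) (p : Po) : Integrable (fun x => ev p x * (ev DD x) ^ κ) gam :=
  ((ev_pg p).mul ((ev_pg DD).rpow DD_nonneg κ hκ)).integrable

lemma J_add (κ : ℝ) (hκ : 0 ≤ κ) (p q : Po) : J κ (p + q) = J κ p + J κ q := by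
  unfold J
  rw [← integral_add (wint κ hκ p) (wint κ hκ q)]
  congr 1; ext x; simp [ev]; ring

lemma J_C (κ : ℝ) (c : ℝ) (p : Po) : J κ (C c * p) = c * J κ p := by
  unfold J
  rw [← integral_const_mul]
  congr 1; ext x; simp [ev]; ring

lemma J_zero (κ : ℝ) : J κ 0 = 0 := by simp [J, ev]

lemma J_sub (κ : ℝ) (hκ : 0 ≤ κ) (p q : Po) : J κ (p - q) = J κ p - J κ q := by
  have : p - q = p + C (-1) * q := by simp; ring
  rw [this, J_add κ hκ, J_C]; ring

lemma J_rel (κ : ℝ) (hκ : 0 ≤ κ) (f l m h g : Po) (hl : ∑ i, pderiv i (pderiv i f) = l)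
    (hm : ∑ i, pderiv i f * X i = m) (hh : Gam f del = h * del) :
    J κ (Gam f g + g * (l - m) + C (2 * κ) * (g * h)) = 0 := by
  have := ibp_main DD DD_nonneg κ hκ (fun i => g * pderiv i f) (g * h) ?_
  · have e1 : ∑ i, pderiv i (g * pderiv i f) = Gam f g + g * l := by
      rw [← hl, Gam, Finset.mul_sum, ← Finset.sum_add_distrib]
      refine Finset.sum_congr rfl fun i _ => ?_
      rw [Derivation.leibniz, smul_eq_mul, smul_eq_mul]; ring
    have e2 : ∑ i, g * pderiv i f * X i = g * m := by
      rw [← hm, Finset.mul_sum]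
      exact Finset.sum_congr rfl fun i _ => by ring
    have e3 : Gam f g + g * (l - m) + C (2 * κ) * (g * h) =
        ∑ i, pderiv i (g * pderiv i f) - ∑ i, g * pderiv i f * X i + C (2 * κ) * (g * h) := by
      rw [e1, e2]; ring
    rw [e3]
    exact this
  · have e : ∑ i, g * pderiv i f * pderiv i DD = g * Gam f DD := by
      rw [Gam, Finset.mul_sum]
      exact Finset.sum_congr rfl fun i _ => by ring
    rw [e, DD, pow_two, Gam_mul, hh]; ring

lemma rel_1 (κ : ℝ) (hκ : 0 ≤ κ) (g : Po) (k : ℕ) (hg : Gam e1 g = (2 * k) * g) :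
    J κ (e1 * g) = (3 + 12 * κ + k) * J κ g := by
  have := J_rel κ hκ e1 6 (2 * e1) 12 g
    (by simp [e1, Fin.sum_univ_four, pderiv_X, pd2]; ring)
    (by simp [e1, Fin.sum_univ_four, pderiv_X]; ring) Gam_1d
  have e : Gam e1 g + g * (6 - 2 * e1) + C (2 * κ) * (g * 12) =
      C (2 * (3 + 12 * κ + k)) * g - C 2 * (e1 * g) := by
    rw [hg]; simp only [map_mul, map_add, map_ofNat, map_natCast]; ring
  rw [e, J_sub κ hκ, J_C, J_C] at this
  linarith

lemma rel_q (κ : ℝ) (hκ : 0 ≤ κ) (g r : Po) (hg : Gam qq g = r) :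
    3 * J κ (qq * g) = J κ r := by
  have := J_rel κ hκ qq 0 (3 * qq) 0 g
    (by simp [qq, Fin.sum_univ_four, pderiv_X])
    (by simp [qq, Fin.sum_univ_four, pderiv_X]; ring) Gam_qd
  have e : Gam qq g + g * (0 - 3 * qq) + C (2 * κ) * (g * 0) =
      r - C 3 * (qq * g) := by
    rw [hg]; simp only [map_ofNat]; ring
  rw [e, J_sub κ hκ, J_C] at this
  linarith

lemma rel_2 (κ : ℝ) (hκ : 0 ≤ κ) (g r : Po) (hg : Gam e2 g = r) :
    4 * J κ (e2 * g) = J κ r + (4 + 8 * κ) * J κ (e1 * g) := by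
  have := J_rel κ hκ e2 (4 * e1) (4 * e2) (4 * e1) g
    (by simp [e1, e2, Fin.sum_univ_four, pderiv_X, pd2]; ring)
    (by simp [e2, Fin.sum_univ_four, pderiv_X]; ring) Gam_2d
  have e : Gam e2 g + g * (4 * e1 - 4 * e2) + C (2 * κ) * (g * (4 * e1)) =
      r + C (4 + 8 * κ) * (e1 * g) - C 4 * (e2 * g) := by
    rw [hg]; simp only [map_mul, map_add, map_ofNat]; ring
  rw [e, J_sub κ hκ, J_add κ hκ, J_C, J_C] at this
  linarith

lemma J_rec (κ : ℝ) (hκ : 0 ≤ κ) : J κ DD = 24 * (2*κ+1)*(3*κ+1)*(3*κ+2)*(4*κ+1)*(4*κ+2)*(4*κ+3) * J κ 1 := by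
  -- Euler relations
  have a0 := rel_1 κ hκ 1 0 (by rw [Gam_one]; simp)
  have a2 := rel_1 κ hκ e2 4 (by rw [Gam_12]; norm_num)
  have aq := rel_1 κ hκ (qq * qq) 6 (by rw [Gam_mul, Gam_1q]; push_cast; ring)
  have aq1 := rel_1 κ hκ (e1 * (qq * qq)) 8
    (by rw [Gam_mul, Gam_mul, Gam_1q, Gam_11]; push_cast; ring)
  have aq2 := rel_1 κ hκ (e1 * (e1 * (qq * qq))) 10
    (by rw [Gam_mul, Gam_mul, Gam_mul, Gam_1q, Gam_11]; push_cast; ring)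
  have a22 := rel_1 κ hκ (e2 * e2) 8 (by rw [Gam_mul, Gam_12]; push_cast; ring)
  have a122 := rel_1 κ hκ (e1 * (e2 * e2)) 10
    (by rw [Gam_mul, Gam_mul, Gam_12, Gam_11]; push_cast; ring)
  have a2q := rel_1 κ hκ (e2 * (qq * qq)) 10
    (by rw [Gam_mul, Gam_mul, Gam_12, Gam_1q]; push_cast; ring)
  -- cubic relations
  have q1 := rel_q κ hκ qq e2 Gam_qq
  have q3 := rel_q κ hκ (qq * (qq * qq)) (C 3 * (e2 * (qq * qq)))
    (by simp only [Gam_mul, Gam_qq, map_ofNat]; ring)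
  have q2 := rel_q κ hκ (qq * e2) (e2 * e2 + C 4 * (e1 * (qq * qq)))
    (by simp only [Gam_mul, Gam_qq, Gam_q2, map_ofNat]; ring)
  -- quartic relations
  have b1 := rel_2 κ hκ 1 0 (by simp [Gam_one])
  have b2 := rel_2 κ hκ e2 (C 4 * (e1 * e2) + C 12 * (qq * qq))
    (by simp only [Gam_22, map_ofNat]; ring)
  have b3 := rel_2 κ hκ (e2 * e2) (C 8 * (e1 * (e2 * e2)) + C 24 * (e2 * (qq * qq)))
    (by simp only [Gam_mul, Gam_22, map_ofNat]; ring)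
  have hDD : DD = e1 * (e1 * (e2 * e2)) - C 4 * (e2 * (e2 * e2)) -
      C 4 * (e1 * (e1 * (e1 * (qq * qq)))) + C 18 * (e1 * (e2 * (qq * qq))) -
      C 27 * (qq * (qq * (qq * qq))) := by
    rw [DD_eq]; simp only [map_ofNat]; ring
  have c1 : qq * (qq * e2) = e2 * (qq * qq) := by ring
  rw [hDD]
  simp only [J_sub κ hκ, J_add κ hκ, J_C, mul_one, J_zero, c1] at *
  generalize J κ 1 = j0 at *
  generalize J κ e1 = j1 at *
  generalize J κ e2 = j2 at *
  generalize J κ (qq * qq) = jq at *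
  push_cast at *
  have h2 : j2 = (1 + 2 * κ) * (3 + 12 * κ) * j0 := by linear_combination b1 / 4 + (1 + 2 * κ) * a0
  have hq : jq = (1 + 2 * κ) * (1 + 4 * κ) * j0 := by linear_combination q1 / 3 + h2 / 3
  rw [hq] at aq b2
  rw [h2] at a2
  rw [a2] at b2
  have h22 : J κ (e2 * e2) = (1 + 2 * κ) * (1 + 4 * κ) * j0 *
      (3 * (2 + 2 * κ) * (7 + 12 * κ) + 3) := by linear_combination b2 / 4
  rw [aq] at q2 aq1
  rw [aq1] at aq2
  rw [h22] at q2 a22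
  rw [a22] at a122 b3
  have h2q : J κ (e2 * (qq * qq)) = (1 + 2 * κ) * (1 + 4 * κ) * j0 *
      (3 * (2 + 2 * κ) * (7 + 12 * κ) + 3 + 4 * (9 + 12 * κ)) / 3 := by linear_combination q2 / 3
  rw [h2q] at b3 a2q q3
  linear_combination a122 - b3 - 4 * aq2 + 18 * a2q - 9 * q3

end recursion

section final

/-- the (unnormalized) Mehta integral -/
noncomputable def W (κ : ℝ) : ℝ := ∫ x, (ev DD x) ^ κ ∂gam

lemma W_eq (κ : ℝ) : J κ 1 = W κ := by simp [J, W, ev]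

lemma W_rec (κ : ℝ) (hκ : 0 ≤ κ) :
    W (κ + 1) = 24 * (2*κ+1)*(3*κ+1)*(3*κ+2)*(4*κ+1)*(4*κ+2)*(4*κ+3) * W κ := by
  rw [← W_eq κ, ← J_rec κ hκ, W, J]
  congr 1; ext x
  rw [Real.rpow_add_one' (DD_nonneg x) (by positivity), mul_comm]

lemma w_pg (κ : ℝ) (hκ : 0 ≤ κ) : PG (fun x => (ev DD x) ^ κ) := (ev_pg DD).rpow DD_nonneg κ hκ

lemma W_pos (κ : ℝ) (hκ : 0 ≤ κ) : 0 < W κ := by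
  have h := w_pg κ hκ
  rw [W, integral_gam]
  have hc : Continuous (fun x : E4 => (ev DD x) ^ κ * Real.exp (-‖x‖ ^ 2 / 2)) :=
    h.1.mul (by fun_prop)
  refine (integral_pos_iff_support_of_nonneg (fun x => ?_) h.integrable_vol).2 ?_
  · exact mul_nonneg (Real.rpow_nonneg (DD_nonneg x) _) (Real.exp_pos _).le
  · refine hc.isOpen_support.measure_pos volume ⟨!₂[0, 0, 1, 2], ?_⟩
    rw [Function.mem_support]
    refine (mul_pos (Real.rpow_pos_of_pos ?_ _) (Real.exp_pos _)).ne'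
    simp [ev, DD, del]
    norm_num

lemma W_LC : LC W := by
  intro x y a b hx hy ha hb hab
  have e : Real.HolderConjugate (1 / a) (1 / b) := Real.holderConjugate_one_div ha hb hab
  have mem : ∀ c u : ℝ, 0 < c → 0 ≤ u →
      MemLp (fun z => (ev DD z) ^ (c * u)) (ENNReal.ofReal (1 / c)) gam := by
    intro c u hc hu
    have A : ENNReal.ofReal (1 / c) ≠ 0 := by
      rwa [Ne, ENNReal.ofReal_eq_zero, not_le, one_div_pos]
    have B : ENNReal.ofReal (1 / c) ≠ ⊤ := ENNReal.ofReal_ne_top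
    have hm := (w_pg (c * u) (by positivity)).1.aestronglyMeasurable (μ := gam)
    rw [← memLp_norm_rpow_iff hm A B, ENNReal.toReal_ofReal (one_div_nonneg.mpr hc.le),
      ENNReal.div_self A B, memLp_one_iff_integrable]
    refine (w_pg u hu).integrable.congr (Eventually.of_forall fun z => ?_)
    simp only
    rw [Real.norm_of_nonneg (Real.rpow_nonneg (DD_nonneg z) _), ← Real.rpow_mul (DD_nonneg z)]
    congr 1; field_simp
  have H := integral_mul_le_Lp_mul_Lq_of_nonneg e (μ := gam)
    (f := fun z => (ev DD z) ^ (a * x)) (g := fun z => (ev DD z) ^ (b * y))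
    (Eventually.of_forall fun z => Real.rpow_nonneg (DD_nonneg z) _)
    (Eventually.of_forall fun z => Real.rpow_nonneg (DD_nonneg z) _) (mem a x ha hx) (mem b y hb hy)
  have p1 : ∀ c u : ℝ, 0 < c → ∀ z, ((ev DD z) ^ (c * u)) ^ (1 / c) = (ev DD z) ^ u := by
    intro c u hc z
    rw [← Real.rpow_mul (DD_nonneg z)]
    congr 1; field_simp
  simp only [p1 a x ha, p1 b y hb, one_div_one_div] at H
  unfold W
  convert! H using 1
  congr 1; ext z
  rw [Real.rpow_add_of_nonneg (DD_nonneg z) (by positivity) (by positivity)]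

lemma W_value (κ : ℝ) (hκ : 0 ≤ κ) : W κ * Real.Gamma (1 + κ) ^ 3 =
    Real.Gamma (1 + 2 * κ) * Real.Gamma (1 + 3 * κ) * Real.Gamma (1 + 4 * κ) * W 0 := by
  have h0 := W_pos 0 le_rfl
  have := final_unique (fun κ => W κ / W 0) ?_ (fun x hx => div_pos (W_pos x hx) h0)
    (div_self h0.ne') (fun x hx => by simp only [W_rec x hx]; ring) κ hκ
  · rw [← this]; field_simp
  · intro x y a b hx hy ha hb hab
    have h := W_LC x y a b hx hy ha hb hab
    simp only
    have h1 := W_pos x hx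
    have h2 := W_pos y hy
    rw [Real.div_rpow h1.le h0.le, Real.div_rpow h2.le h0.le, div_mul_div_comm,
      ← Real.rpow_add h0, hab, Real.rpow_one]
    gcongr

/-- the Hadamard matrix as a linear map -/
noncomputable def hadL : E4 →ₗ[ℝ] E4 where
  toFun x := !₂[(x 0 + x 1 + x 2 + x 3) / 2, (x 0 + x 1 - x 2 - x 3) / 2,
    (x 0 - x 1 + x 2 - x 3) / 2, (x 0 - x 1 - x 2 + x 3) / 2]
  map_add' x y := by
    ext i; fin_cases i <;> simp <;> ring
  map_smul' c x := by
    ext i; fin_cases i <;> simp <;> ring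

lemma hadL_inv : Function.Involutive hadL := by
  intro x
  ext i; fin_cases i <;> simp [hadL] <;> ring

/-- the Hadamard isometry -/
noncomputable def had : E4 ≃ₗᵢ[ℝ] E4 where
  toLinearEquiv := LinearEquiv.ofInvolutive hadL hadL_inv
  norm_map' x := by
    rw [EuclideanSpace.norm_eq, EuclideanSpace.norm_eq]
    congr 1
    simp [Fin.sum_univ_four, hadL]
    ring

lemma prod_eq (κ : ℝ) (x : E4) :
    ∏ p ∈ Finset.univ.filter (fun p : Fin 4 × Fin 4 => p.1 < p.2), |x p.1 - x p.2| ^ (2 * κ) =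
    (((x 0 - x 1) * (x 0 - x 2) * (x 0 - x 3) * (x 1 - x 2) * (x 1 - x 3) * (x 2 - x 3)) ^ 2) ^ κ := by
  rw [Real.finsetProd_rpow _ _ (fun _ _ => abs_nonneg _), ← Finset.abs_prod,
    Real.rpow_mul (abs_nonneg _), Real.rpow_two, sq_abs]
  congr 2
  have : (Finset.univ.filter (fun p : Fin 4 × Fin 4 => p.1 < p.2)) =
    {(0,1),(0,2),(0,3),(1,2),(1,3),(2,3)} := by decide
  rw [this]
  simp
  ring

lemma had_DD (x : E4) : ((had x 0 - had x 1) * (had x 0 - had x 2) * (had x 0 - had x 3) *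
    (had x 1 - had x 2) * (had x 1 - had x 3) * (had x 2 - had x 3)) ^ 2 = ev DD x := by
  have h : had x = !₂[(x 0 + x 1 + x 2 + x 3) / 2, (x 0 + x 1 - x 2 - x 3) / 2,
    (x 0 - x 1 + x 2 - x 3) / 2, (x 0 - x 1 - x 2 + x 3) / 2] := rfl
  rw [h]
  simp [ev, DD, del]
  ring

lemma DD_hom (r : ℝ) (x : E4) : ev DD (r • x) = r ^ 12 * ev DD x := by
  simp [ev, DD, del]; ring

end final

end MMS

/-- The Macdonald–Mehta–Selberg integral on the unit sphere of `ℝ⁴`: for the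
    rotation-invariant probability measure `ω` on the sphere and `κ ≥ 0`,
    `∫_S ∏_{1≤i<j≤4} |xᵢ − xⱼ|^{2κ} dω
      = 2^{−6κ} Γ(1+2κ)Γ(1+3κ)Γ(1+4κ)/(Γ(2+6κ)Γ(1+κ)³)`. -/
theorem macdonald_mehta_selberg_sphere
    (ω : Measure (Metric.sphere (0 : EuclideanSpace ℝ (Fin 4)) 1))
    [IsProbabilityMeasure ω]
    (hinv : ∀ R : EuclideanSpace ℝ (Fin 4) ≃ₗᵢ[ℝ] EuclideanSpace ℝ (Fin 4),
      Measure.map (fun x : Metric.sphere (0 : EuclideanSpace ℝ (Fin 4)) 1 =>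
        (⟨R x.1, mem_sphere_zero_iff_norm.mpr
          (by rw [R.norm_map]; exact mem_sphere_zero_iff_norm.mp x.2)⟩ :
            Metric.sphere (0 : EuclideanSpace ℝ (Fin 4)) 1)) ω = ω)
    (κ : ℝ) (hκ : 0 ≤ κ) :
    ∫ x : Metric.sphere (0 : EuclideanSpace ℝ (Fin 4)) 1,
        ∏ p ∈ Finset.univ.filter (fun p : Fin 4 × Fin 4 => p.1 < p.2),
          |(x : EuclideanSpace ℝ (Fin 4)) p.1 - (x : EuclideanSpace ℝ (Fin 4)) p.2|
            ^ (2 * κ) ∂ω =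
      ((2:ℝ) ^ (6 * κ))⁻¹ *
          (Real.Gamma (1 + 2 * κ) * Real.Gamma (1 + 3 * κ) * Real.Gamma (1 + 4 * κ)) /
        (Real.Gamma (2 + 6 * κ) * Real.Gamma (1 + κ) ^ 3) := by
  have hc : Continuous (fun x : MMS.E4 =>
      ∏ p ∈ Finset.univ.filter (fun p : Fin 4 × Fin 4 => p.1 < p.2), |x p.1 - x p.2| ^ (2 * κ)) := by
    refine continuous_finsetProd _ fun p _ => ?_
    exact Continuous.rpow_const (by fun_prop) fun x => Or.inr (by positivity)
  rw [MMS.omega_comp ω hinv MMS.had (fun x : MMS.E4 =>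
      ∏ p ∈ Finset.univ.filter (fun p : Fin 4 × Fin 4 => p.1 < p.2), |x p.1 - x p.2| ^ (2 * κ)) hc]
  simp only [MMS.prod_eq, MMS.had_DD]
  have h1 := MMS.polar_integral ω hinv (fun x => MMS.ev MMS.DD x ^ κ) (MMS.w_pg κ hκ).1 (6 * κ)
    (by positivity) (fun r x hr => by
      rw [MMS.DD_hom, Real.mul_rpow (by positivity) (MMS.DD_nonneg x), ← Real.rpow_natCast,
        ← Real.rpow_mul hr]
      congr 2; push_cast; ring)
  have h0 : ∫ _x : MMS.E4, (1:ℝ) ∂MMS.gam = MMS.W 0 := by simp [MMS.W]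
  have hv := MMS.W_value κ hκ
  have p0 := MMS.W_pos 0 le_rfl
  rw [h0] at h1
  change MMS.W κ = _ at h1
  rw [h1] at hv
  have g1 : 0 < Real.Gamma (1 + κ) := Real.Gamma_pos_of_pos (by positivity)
  have g2 : 0 < Real.Gamma (2 + 6 * κ) := Real.Gamma_pos_of_pos (by positivity)
  have g3 : 0 < (2:ℝ) ^ (6 * κ) := by positivity
  rw [eq_div_iff (by positivity), ← mul_right_inj' g3.ne', ← mul_left_inj' p0.ne']
  rw [mul_inv_cancel_left₀ g3.ne', ← hv]
  ring
end
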